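/- arXiv:1203.1158 — 4 statements merged into one kernel-verified Lean document; each statement's English description precedes it below -/
import Mathlib

section
/- Let G be a connected graph of diameter 2 on an even number n ≥ 90 of vertices, and for each integer i let V_i = {v ∈ V(G) : deg(v) = i}. If either (1) the number of indices i for which |V_i| is odd is greater than n/2, or (2) |V_i| is even for every i, then h(G) = n/2. -/
open Finset

/-- The multiset of pairwise distances between distinct vertices of `S` in `G`
(one entry for each unordered pair of distinct vertices of `S`). -/
noncomputable def distMultiset {V : Type*} (G : SimpleGraph V) (S : Finset V) : Multiset ℕ :=
  letI := Classical.decEq V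
  (S.sym2.filter fun p => ¬ p.IsDiag).val.map
    (Sym2.lift ⟨fun a b => G.dist a b, fun _ _ => SimpleGraph.dist_comm⟩)

/-- Two disjoint vertex sets are homometric if their distance multisets coincide. -/
def Homometric {V : Type*} (G : SimpleGraph V) (S₁ S₂ : Finset V) : Prop :=
  Disjoint S₁ S₂ ∧ distMultiset G S₁ = distMultiset G S₂

/-- `h(G)`: the largest `h` such that `G` contains two disjoint homometric sets of
size `h` each. -/
noncomputable def homNumber {V : Type*} (G : SimpleGraph V) : ℕ :=
  sSup {h : ℕ | ∃ S₁ S₂ : Finset V, Homometric G S₁ S₂ ∧ S₁.card = h ∧ S₂.card = h}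

/-!
In a graph of diameter at most two on `n` vertices the distances from a vertex `v` add up to
`2 * n - 2 - deg v`. Hence a half of the vertices carrying half of the degree sum has as many
adjacent pairs as its complement, and the two halves are homometric.

To find such a half, split all degree classes evenly, leaving over one vertex of each odd class.
The left-over degrees `a 0 < a 1 < ⋯ < a (2 * m + 1)` satisfy `a (2 * m + 1) - a 0 ≤ 4 * m`. Put
the two members of each pair `{a (2 * j), a (2 * j + 1)}` on different sides. The `m + 1` gaps
inside the pairs add up to at most `3 * m`, so that choosing signs greedily, largest gap first,
brings their signed sum down to `0` (by parity) except in two cases. If all gaps are at least two,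
the greedy choice may end at `±2`, but then there is a unit gap between two consecutive pairs, which
is set aside for the correction. If one gap exceeds the sum of all others, it is first compensated
by splitting two of the other pairs as `{2 * s, 2 * s + 1}` against `{2 * r, 2 * r + 1}`.
-/

/-- `HasBalancedSplit w I c`: the set `I` is the disjoint union of two parts of the same size whose
`w`-sums differ by `c`; equivalently, `c` is a signed sum of the weights with equally many plus and
minus signs. The witness `u` is the part carrying the plus signs. -/
def HasBalancedSplit {ι : Type*} (w : ι → ℤ) (I : Finset ι) (c : ℤ) : Prop :=
  ∃ u ⊆ I, 2 * #u = #I ∧ 2 * ∑ i ∈ u, w i = ∑ i ∈ I, w i + c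

namespace HasBalancedSplit

variable {ι κ : Type*} {w : ι → ℤ} {I I' : Finset ι} {c c' : ℤ}

theorem empty : HasBalancedSplit w ∅ 0 := ⟨∅, by simp⟩

theorem neg (h : HasBalancedSplit w I c) : HasBalancedSplit w I (-c) := by
  classical
  obtain ⟨u, hu, hcard, hsum⟩ := h
  refine ⟨I \ u, sdiff_subset, ?_, ?_⟩
  · rw [card_sdiff_of_subset hu]; omega
  · linarith [sum_sdiff (f := w) hu]

theorem union [DecidableEq ι] (h : HasBalancedSplit w I c) (h' : HasBalancedSplit w I' c')
    (hd : Disjoint I I') : HasBalancedSplit w (I ∪ I') (c + c') := by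
  obtain ⟨u, hu, hcard, hsum⟩ := h
  obtain ⟨u', hu', hcard', hsum'⟩ := h'
  have hdu : Disjoint u u' := hd.mono hu hu'
  refine ⟨u ∪ u', union_subset_union hu hu', ?_, ?_⟩
  · rw [card_union_of_disjoint hd, card_union_of_disjoint hdu]; omega
  · rw [sum_union hd, sum_union hdu]; linarith

theorem pair [DecidableEq ι] (w : ι → ℤ) {x y : ι} (h : x ≠ y) :
    HasBalancedSplit w {x, y} (w y - w x) :=
  ⟨{y}, by simp, by rw [card_pair h, card_singleton], by rw [sum_pair h, sum_singleton]; ring⟩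

theorem of_even_card_of_const {k : ℤ} (hI : Even #I) (hw : ∀ i ∈ I, w i = k) :
    HasBalancedSplit w I 0 := by
  obtain ⟨r, hr⟩ := hI
  obtain ⟨u, hu, hcard⟩ := exists_subset_card_eq (show r ≤ #I by omega)
  refine ⟨u, hu, by omega, ?_⟩
  rw [sum_congr rfl hw, sum_congr rfl fun i hi => hw i (hu hi), sum_const, sum_const, hcard, hr]
  simp only [nsmul_eq_mul, Nat.cast_add]
  ring

theorem image_iff [DecidableEq ι] {f : κ → ι} {K : Finset κ} (hf : Set.InjOn f K) :
    HasBalancedSplit w (K.image f) c ↔ HasBalancedSplit (w ∘ f) K c := by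
  have himage : ∀ u ⊆ K, (2 * #(u.image f) = #(K.image f) ∧
      2 * ∑ i ∈ u.image f, w i = ∑ i ∈ K.image f, w i + c) ↔
      (2 * #u = #K ∧ 2 * ∑ k ∈ u, (w ∘ f) k = ∑ k ∈ K, (w ∘ f) k + c) := fun u hu => by
    have hfu : Set.InjOn f u := hf.mono (coe_subset.mpr hu)
    rw [card_image_of_injOn hf, card_image_of_injOn hfu, sum_image hf, sum_image hfu]
    rfl
  constructor
  · rintro ⟨v, hv, h⟩
    obtain ⟨u, hu, rfl⟩ := subset_image_iff.mp hv
    exact ⟨u, hu, (himage u hu).mp h⟩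
  · rintro ⟨u, hu, h⟩
    exact ⟨u.image f, image_subset_image hu, (himage u hu).mpr h⟩

theorem even_sum_add (h : HasBalancedSplit w I c) : Even (∑ i ∈ I, w i + c) := by
  obtain ⟨u, -, -, hsum⟩ := h
  exact ⟨∑ i ∈ u, w i, by linarith⟩

theorem zero_of_abs_le_one (h : HasBalancedSplit w I c) (hI : Even (∑ i ∈ I, w i))
    (hc : |c| ≤ 1) : HasBalancedSplit w I 0 := by
  have hceven : Even c := (Int.even_add.mp h.even_sum_add).mp hI
  have hc0 : c = 0 := by
    rw [abs_le] at hc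
    obtain ⟨r, rfl⟩ := hceven
    omega
  exact hc0 ▸ h

theorem union_zero_of_abs_le_two [DecidableEq ι] (h : HasBalancedSplit w I c) (hc : |c| ≤ 2)
    (h' : HasBalancedSplit w I' 1) (hd : Disjoint I I') (hI : Even (∑ i ∈ I ∪ I', w i)) :
    HasBalancedSplit w (I ∪ I') 0 := by
  rw [abs_le] at hc
  rcases le_total 0 c with h0 | h0
  · exact (h.union h'.neg hd).zero_of_abs_le_one hI (abs_le.mpr ⟨by linarith, by linarith⟩)
  · exact (h.union h' hd).zero_of_abs_le_one hI (abs_le.mpr ⟨by linarith, by linarith⟩)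

/-- Greedy signing: blocks are added in order of decreasing value, each with the sign that moves the
running value towards zero. -/
theorem exists_abs_le_biUnion [DecidableEq ι] {J : Finset κ} {B : κ → Finset ι} {g : κ → ℤ} {b : ℤ}
    (hB : ∀ j ∈ J, HasBalancedSplit w (B j) (g j)) (hdisj : (J : Set κ).PairwiseDisjoint B)
    (hpos : ∀ j ∈ J, 0 ≤ g j) (hg : ∀ j ∈ J, g j ≤ b + ∑ i ∈ J with g i < g j, g i)
    (hI : HasBalancedSplit w I c) (hIB : ∀ j ∈ J, Disjoint I (B j))
    (hc : |c| ≤ b + ∑ j ∈ J, g j) :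
    ∃ c', |c'| ≤ b ∧ HasBalancedSplit w (I ∪ J.biUnion B) c' := by
  classical
  induction J using Finset.induction_on_max_value g generalizing I c with
  | empty => exact ⟨c, by simpa using hc, by simpa using hI⟩
  | insert x s hx hmax ih =>
    simp only [forall_mem_insert] at hB hpos hg hIB
    rw [sum_insert hx] at hc
    have hsmaller : ∀ j, g j ≤ g x →
        ∑ i ∈ insert x s with g i < g j, g i = ∑ i ∈ s with g i < g j, g i := fun j hj => by
      rw [filter_insert, if_neg hj.not_gt]
    have hgx : g x ≤ b + ∑ i ∈ s, g i := by
      refine hg.1.trans ?_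
      rw [hsmaller x le_rfl]
      gcongr
      · exact fun i hi _ => hpos.2 i hi
      · exact filter_subset _ _
    obtain ⟨d, hd, hId⟩ : ∃ d, |d| ≤ b + ∑ i ∈ s, g i ∧ HasBalancedSplit w (I ∪ B x) d := by
      rw [abs_le] at hc
      rcases le_total 0 c with h0 | h0
      · exact ⟨c + -g x, abs_le.mpr ⟨by linarith, by linarith⟩, hI.union hB.1.neg hIB.1⟩
      · exact ⟨c + g x, abs_le.mpr ⟨by linarith [hpos.1], by linarith⟩, hI.union hB.1 hIB.1⟩
    rw [biUnion_insert, ← union_assoc]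
    rw [coe_insert, Set.pairwiseDisjoint_insert_of_notMem (mem_coe.not.mpr hx)] at hdisj
    refine ih hB.2 hdisj.1 hpos.2 (fun j hj => ?_) hId (fun j hj => ?_) hd
    · rw [← hsmaller j (hmax j hj)]; exact hg.2 j hj
    · exact disjoint_union_left.mpr ⟨hIB.2 j hj, hdisj.2 j hj⟩

theorem of_even_fibers [DecidableEq κ] {S : Finset ι} {d : ι → κ}
    (hS : ∀ k, Even #{v ∈ S | d v = k}) (w : κ → ℤ) : HasBalancedSplit (w ∘ d) S 0 := by
  classical
  obtain ⟨c, hc, h⟩ := exists_abs_le_biUnion (w := w ∘ d) (J := S.image d) (g := 0) (b := 0)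
    (B := fun k => {v ∈ S | d v = k})
    (fun k _ => of_even_card_of_const (hS k) (k := w k) (by simp +contextual))
    (fun k _ l _ hkl => disjoint_filter.mpr fun v _ hk hl => hkl (hk ▸ hl))
    (by simp) (by simp) empty (by simp) (by simp)
  rwa [abs_nonpos_iff.mp hc, empty_union,
    biUnion_filter_eq_of_maps_to fun v hv => mem_image_of_mem d hv] at h

end HasBalancedSplit

section OddValues

variable {ι κ : Type*} [DecidableEq κ] {S : Finset ι} {d : ι → κ}

/-- The values that `d` takes an odd number of times on `S`. -/
def oddValues (S : Finset ι) (d : ι → κ) : Finset κ :=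
  {k ∈ S.image d | Odd #{v ∈ S | d v = k}}

theorem mem_oddValues {k : κ} : k ∈ oddValues S d ↔ Odd #{v ∈ S | d v = k} := by
  refine ⟨fun h => (mem_filter.mp h).2, fun h => mem_filter.mpr ⟨?_, h⟩⟩
  obtain ⟨v, hv⟩ := card_pos.mp h.pos
  exact mem_image.mpr ⟨v, mem_filter.mp hv⟩

theorem exists_transversal_oddValues [DecidableEq ι] (S : Finset ι) (d : ι → κ) :
    ∃ T ⊆ S, Set.InjOn d T ∧ T.image d = oddValues S d ∧
      ∀ k, Even #{v ∈ S \ T | d v = k} := by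
  have hsurj : Set.SurjOn d S (oddValues S d) := fun k hk => by
    simpa using (mem_filter.mp (mem_coe.mp hk)).1
  obtain ⟨T, hTS, hinj, himg⟩ := exists_subset_injOn_image_eq_of_surjOn _ _ hsurj
  refine ⟨T, coe_subset.mp hTS, hinj, himg, fun k => ?_⟩
  have hsdiff : #{v ∈ S \ T | d v = k} + #{v ∈ T | d v = k} = #{v ∈ S | d v = k} := by
    rw [← card_union_of_disjoint (disjoint_filter_filter sdiff_disjoint), ← filter_union,
      sdiff_union_of_subset (coe_subset.mp hTS)]
  have hle : #{v ∈ T | d v = k} ≤ 1 := card_le_one.mpr fun v hv v' hv' => by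
    rw [mem_filter] at hv hv'
    exact hinj hv.1 hv'.1 (hv.2.trans hv'.2.symm)
  have hpos : 0 < #{v ∈ T | d v = k} ↔ Odd #{v ∈ S | d v = k} := by
    rw [← mem_oddValues, ← himg, mem_image, card_pos, filter_nonempty_iff]
  grind

theorem even_sum_oddValues {f : κ → ℤ} (hf : Even (∑ v ∈ S, f (d v))) :
    Even (∑ k ∈ oddValues S d, f k) := by
  classical
  obtain ⟨T, hTS, hinj, himg, heven⟩ := exists_transversal_oddValues S d
  have hrest := (HasBalancedSplit.of_even_fibers heven f).even_sum_add
  rw [add_zero] at hrest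
  rw [← himg, sum_image hinj]
  rw [← sum_sdiff hTS] at hf
  exact (Int.even_add.mp hf).mp hrest

theorem HasBalancedSplit.comp_of_oddValues {w : κ → ℤ} (h : HasBalancedSplit w (oddValues S d) 0) :
    HasBalancedSplit (w ∘ d) S 0 := by
  classical
  obtain ⟨T, hTS, hinj, himg, heven⟩ := exists_transversal_oddValues S d
  rw [← himg, image_iff hinj] at h
  simpa [sdiff_union_of_subset hTS] using (of_even_fibers heven w).union h sdiff_disjoint

end OddValues

section SmallSumFamilies

variable {κ : Type*} {s : Finset κ} {g : κ → ℤ} {b : ℤ} {p : κ}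

theorem sum_ge_of_add_sum_lt (hg : ∀ j ∈ s, b ≤ g j) (hp : b + ∑ j ∈ s with g j < g p, g j < g p) :
    #{j ∈ s | g p ≤ g j} * (b + 1) + b * (#{j ∈ s | g p ≤ g j} + 1) * (#s - #{j ∈ s | g p ≤ g j})
      ≤ ∑ j ∈ s, g j := by
  set k : ℕ := #{j ∈ s | g p ≤ g j}
  have hcard : #{j ∈ s | g j < g p} + k = #s := by
    simpa only [not_lt] using card_filter_add_card_filter_not (s := s) (g · < g p)
  have hsmall : (#s - k) * b ≤ ∑ j ∈ s with g j < g p, g j := by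
    have h := card_nsmul_le_sum {j ∈ s | g j < g p} g b fun j hj => hg j (mem_filter.mp hj).1
    rw [nsmul_eq_mul] at h
    rwa [← hcard, Nat.cast_add, add_sub_cancel_right]
  have hlarge : k * g p ≤ ∑ j ∈ s with g p ≤ g j, g j := by
    simpa only [nsmul_eq_mul] using
      card_nsmul_le_sum {j ∈ s | g p ≤ g j} g (g p) fun j hj => (mem_filter.mp hj).2
  have hsum := sum_filter_add_sum_filter_not s (g · < g p) g
  simp only [not_lt] at hsum
  nlinarith

theorem le_add_sum_of_sum_lt (hb : 1 ≤ b) (hg : ∀ j ∈ s, b ≤ g j)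
    (hs : ∑ j ∈ s, g j < (b + 1) * #s) (hp : p ∈ s) : g p ≤ b + ∑ j ∈ s with g j < g p, g j := by
  by_contra! hlt
  have hsum := sum_ge_of_add_sum_lt hg hlt
  have hpos : 0 < #{j ∈ s | g p ≤ g j} := card_pos.mpr ⟨p, mem_filter.mpr ⟨hp, le_rfl⟩⟩
  have hle : #{j ∈ s | g p ≤ g j} ≤ #s := card_filter_le _ _
  zify at hpos hle
  nlinarith [mul_nonneg (sub_nonneg.mpr hle) (show 0 ≤ b * #{j ∈ s | g p ≤ g j} - 1 by nlinarith)]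

theorem le_add_sum_or_two_le_or_exists_sum_erase_le [DecidableEq κ] (hg : ∀ j ∈ s, 1 ≤ g j)
    (hs : ∑ j ∈ s, g j ≤ 3 * #s - 3) :
    (∀ p ∈ s, g p ≤ 1 + ∑ j ∈ s with g j < g p, g j) ∨ (∀ j ∈ s, 2 ≤ g j) ∨
      ∃ p ∈ s, ∑ j ∈ s.erase p, g j + 2 ≤ g p := by
  rw [or_iff_not_imp_left]
  intro h
  push Not at h
  obtain ⟨p, hps, hp⟩ := h
  have hsum := sum_ge_of_add_sum_lt hg hp
  have hpos : 0 < #{j ∈ s | g p ≤ g j} := card_pos.mpr ⟨p, mem_filter.mpr ⟨hps, le_rfl⟩⟩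
  have hle : #{j ∈ s | g p ≤ g j} ≤ #s := card_filter_le _ _
  -- With `k = #{j ∈ s | g p ≤ g j}` the two bounds on the sum give `(k - 2) * (#s - k - 1) < 0`.
  obtain hk | hk : #{j ∈ s | g p ≤ g j} = #s ∨ #{j ∈ s | g p ≤ g j} = 1 := by
    by_contra! hk
    have h2 : 2 ≤ #{j ∈ s | g p ≤ g j} := by omega
    have hlt : #{j ∈ s | g p ≤ g j} + 1 ≤ #s := by omega
    zify at h2 hlt
    nlinarith [mul_nonneg (sub_nonneg.mpr h2) (sub_nonneg.mpr hlt)]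
  · left
    intro j hj
    have hsmall : 0 ≤ ∑ i ∈ s with g i < g p, g i :=
      sum_nonneg fun i hi => by linarith [hg i (mem_filter.mp hi).1]
    linarith [card_filter_eq_iff.mp hk j hj]
  · right
    refine ⟨p, hps, ?_⟩
    have herase : s.erase p = {j ∈ s | g j < g p} := by
      have honly : {j ∈ s | g p ≤ g j} = {p} :=
        (eq_of_subset_of_card_le (t := {j ∈ s | g p ≤ g j})
          (singleton_subset_iff.mpr (mem_filter.mpr ⟨hps, le_rfl⟩))
          (by rw [hk, card_singleton])).symm
      simp only [← not_le, filter_not, honly, erase_eq]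
    rw [herase]
    linarith

end SmallSumFamilies

section SdiffPair

variable {κ : Type*} [DecidableEq κ] {K : Finset κ} {x y : κ}

theorem card_sdiff_pair_add_two (hx : x ∈ K) (hy : y ∈ K) (hxy : x ≠ y) :
    #(K \ {x, y}) + 2 = #K := by
  rw [← card_pair hxy]
  exact card_sdiff_add_card_eq_card (insert_subset hx (singleton_subset_iff.mpr hy))

theorem sum_sdiff_pair_add (g : κ → ℤ) (hx : x ∈ K) (hy : y ∈ K) (hxy : x ≠ y) :
    ∑ j ∈ K \ {x, y}, g j + (g x + g y) = ∑ j ∈ K, g j := by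
  rw [← sum_pair hxy]
  exact sum_sdiff (insert_subset hx (singleton_subset_iff.mpr hy))

end SdiffPair

section ConsecutivePairs

variable {a : ℕ → ℤ} {m p : ℕ} {b c : ℤ}

/-- The gap inside the `j`-th pair `{2 * j, 2 * j + 1}` of consecutive indices. -/
def pairGap (a : ℕ → ℤ) (j : ℕ) : ℤ := a (2 * j + 1) - a (2 * j)

theorem exists_abs_le_of_pairs {I J T : Finset ℕ} (hpos : ∀ j ∈ J, 0 ≤ pairGap a j)
    (hJ : ∀ p ∈ J, pairGap a p ≤ b + ∑ j ∈ J with pairGap a j < pairGap a p, pairGap a j)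
    (hI : HasBalancedSplit a I c) (hIJ : ∀ i ∈ I, i / 2 ∉ J) (hT : ∀ i, i ∈ T ↔ i ∈ I ∨ i / 2 ∈ J)
    (hc : |c| ≤ b + ∑ j ∈ J, pairGap a j) : ∃ c', |c'| ≤ b ∧ HasBalancedSplit a T c' := by
  have hT' : T = I ∪ J.biUnion fun j => {2 * j, 2 * j + 1} := by
    ext i
    have hi : i / 2 ∈ J ↔ ∃ j ∈ J, i = 2 * j ∨ i = 2 * j + 1 :=
      ⟨fun h => ⟨i / 2, h, by omega⟩, by
        rintro ⟨j, hj, h⟩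
        rwa [show i / 2 = j by omega]⟩
    simp only [hT, hi, mem_union, mem_biUnion, mem_insert, mem_singleton]
  rw [hT']
  refine HasBalancedSplit.exists_abs_le_biUnion
    (fun j _ => HasBalancedSplit.pair a (show 2 * j ≠ 2 * j + 1 by omega))
    (fun j _ l _ hjl => ?_) hpos hJ hI (fun j hj => ?_) hc
  · simp only [Function.onFun, disjoint_left, mem_insert, mem_singleton]
    omega
  · refine disjoint_left.mpr fun i hi hij => hIJ i hi ?_
    simp only [mem_insert, mem_singleton] at hij
    rwa [show i / 2 = j by omega]

theorem sum_pairGap_add_sum (a : ℕ → ℤ) (m : ℕ) :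
    ∑ j ∈ range (m + 1), pairGap a j + ∑ j ∈ range m, (a (2 * j + 2) - a (2 * j + 1)) =
      a (2 * m + 1) - a 0 := by
  induction m with
  | zero => simp [pairGap]
  | succ m ih =>
    rw [sum_range_succ _ (m + 1), sum_range_succ (fun j => a (2 * j + 2) - a (2 * j + 1)) m,
      add_add_add_comm, ih, pairGap,
      show 2 * (m + 1) = 2 * m + 2 by ring]
    ring

theorem sub_le_sub_of_strictMonoOn {N i j : ℕ} (ha : StrictMonoOn a (Set.Iic N)) (hij : i ≤ j)
    (hj : j ≤ N) : (j : ℤ) - i ≤ a j - a i := by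
  induction j, hij using Nat.le_induction with
  | base => simp
  | succ j _ ih =>
    have hstep : a j < a (j + 1) :=
      ha (Set.mem_Iic.mpr (by omega)) (Set.mem_Iic.mpr hj) (Nat.lt_succ_self j)
    push_cast
    linarith [ih (by omega)]

variable (ha : StrictMonoOn a (Set.Iic (2 * m + 1)))
include ha

theorem one_le_pairGap {j : ℕ} (hj : j ≤ m) : 1 ≤ pairGap a j := by
  have h := sub_le_sub_of_strictMonoOn ha (show 2 * j ≤ 2 * j + 1 by omega) (by omega)
  push_cast at h
  rw [pairGap]
  linarith

variable (hspan : a (2 * m + 1) - a 0 ≤ 4 * m)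
include hspan

theorem sum_pairGap_le : ∑ j ∈ range (m + 1), pairGap a j ≤ 3 * m := by
  have hbetween : (m : ℤ) ≤ ∑ j ∈ range m, (a (2 * j + 2) - a (2 * j + 1)) := by
    have h := card_nsmul_le_sum (range m) (fun j => a (2 * j + 2) - a (2 * j + 1)) 1 fun j hj => by
      have h := sub_le_sub_of_strictMonoOn ha (show 2 * j + 1 ≤ 2 * j + 2 by omega)
        (by rw [mem_range] at hj; omega)
      push_cast at h
      linarith
    simpa using h
  linarith [sum_pairGap_add_sum a m]

theorem exists_sub_eq_one_of_two_le_pairGap (h2 : ∀ j ∈ range (m + 1), 2 ≤ pairGap a j) :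
    ∃ j < m, a (2 * j + 2) - a (2 * j + 1) = 1 := by
  by_contra! hne
  have hbetween := card_nsmul_le_sum (range m) (fun j => a (2 * j + 2) - a (2 * j + 1)) 2
    fun j hj => by
      rw [mem_range] at hj
      have h := sub_le_sub_of_strictMonoOn ha (show 2 * j + 1 ≤ 2 * j + 2 by omega) (by omega)
      have hj1 := hne j hj
      omega
  have hpairs := card_nsmul_le_sum _ _ _ h2
  simp only [card_range, nsmul_eq_mul] at hbetween hpairs
  push_cast at hpairs
  linarith [sum_pairGap_add_sum a m]

theorem hasBalancedSplit_of_two_le_pairGap (hm : 3 ≤ m) (hev : Even (∑ i ∈ range (2 * m + 2), a i))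
    (h2 : ∀ j ∈ range (m + 1), 2 ≤ pairGap a j) : HasBalancedSplit a (range (2 * m + 2)) 0 := by
  obtain ⟨j, hjm, hj⟩ := exists_sub_eq_one_of_two_le_pairGap ha hspan h2
  have hmem : j ∈ range (m + 1) := mem_range.mpr (by omega)
  have hmem' : j + 1 ∈ range (m + 1) := mem_range.mpr (by omega)
  set J : Finset ℕ := range (m + 1) \ {j, j + 1} with hJ
  have h2J : ∀ i ∈ J, 2 ≤ pairGap a i := fun i hi => h2 i (sdiff_subset hi)
  have hcard : (#J : ℤ) = m - 1 := by
    have h := card_sdiff_pair_add_two hmem hmem' (by omega)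
    rw [card_range, ← hJ] at h
    omega
  have hsum : ∑ i ∈ J, pairGap a i + (pairGap a j + pairGap a (j + 1)) ≤ 3 * m :=
    (sum_sdiff_pair_add _ hmem hmem' (by omega)).trans_le (sum_pairGap_le ha hspan)
  have hge : (m - 1) * 2 ≤ ∑ i ∈ J, pairGap a i := by
    simpa only [nsmul_eq_mul, hcard] using card_nsmul_le_sum _ _ _ h2J
  have hgj : 2 ≤ pairGap a j := h2 j hmem
  have hgj' : 2 ≤ pairGap a (j + 1) := h2 (j + 1) hmem'
  have houter : a (2 * j + 3) - a (2 * j) = pairGap a j + pairGap a (j + 1) + 1 := by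
    rw [pairGap, pairGap, show 2 * (j + 1) = 2 * j + 2 by ring]
    linarith
  obtain ⟨c, hc, hsplit⟩ := exists_abs_le_of_pairs (b := 2)
    (T := range (2 * m + 2) \ {2 * j + 1, 2 * j + 2}) (fun i hi => by linarith [h2J i hi])
    (fun p hp => le_add_sum_of_sum_lt one_le_two h2J (by rw [hcard]; linarith) hp)
    (HasBalancedSplit.pair a (show 2 * j ≠ 2 * j + 3 by omega))
    (fun i => by simp only [hJ, mem_insert, mem_singleton, mem_sdiff, mem_range]; omega)
    (fun i => by simp only [hJ, mem_insert, mem_singleton, mem_sdiff, mem_range]; omega)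
    (by rw [houter, abs_le]; constructor <;> linarith)
  have hunit : HasBalancedSplit a {2 * j + 1, 2 * j + 2} 1 :=
    hj ▸ HasBalancedSplit.pair a (by omega)
  have hrange : range (2 * m + 2) \ {2 * j + 1, 2 * j + 2} ∪ {2 * j + 1, 2 * j + 2} =
      range (2 * m + 2) := sdiff_union_of_subset fun i => by
    simp only [mem_insert, mem_singleton, mem_range]
    omega
  rw [← hrange] at hev ⊢
  exact hsplit.union_zero_of_abs_le_two hc hunit sdiff_disjoint hev

theorem sub_le_of_pairGap_outside {x y : ℕ} (hxy : x ≤ y) (hy : y ≤ 2 * m + 1) (hp : p ≤ m)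
    (h : y ≤ 2 * p ∨ 2 * p + 1 ≤ x) : a y - a x ≤ y - x + (2 * m - pairGap a p) := by
  rw [pairGap]
  rcases h with h | h
  · have h1 := sub_le_sub_of_strictMonoOn ha (Nat.zero_le x) (by omega)
    have h2 := sub_le_sub_of_strictMonoOn ha h (by omega)
    have h3 := sub_le_sub_of_strictMonoOn ha (show 2 * p + 1 ≤ 2 * m + 1 by omega) le_rfl
    push_cast at h1 h2 h3
    linarith
  · have h1 := sub_le_sub_of_strictMonoOn ha hy le_rfl
    have h2 := sub_le_sub_of_strictMonoOn ha h (by omega)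
    have h3 := sub_le_sub_of_strictMonoOn ha (Nat.zero_le (2 * p)) (by omega)
    push_cast at h1 h2 h3
    linarith

/-- Opposing the pairs `s` and `s + δ` gives at least `4 * δ`, and not much more because a large gap
leaves little room elsewhere; `δ` is chosen to make this close to the large gap. -/
theorem exists_hasBalancedSplit_near_pairGap (hm : 5 ≤ m) (hp : p ≤ m)
    (hge : m + 2 ≤ pairGap a p) :
    ∃ s r, s ≠ p ∧ r ≠ p ∧ s < r ∧ r ≤ m ∧ ∃ c, |pairGap a p - c| ≤ m - 1 ∧
      HasBalancedSplit a ({2 * s, 2 * r} ∪ {2 * s + 1, 2 * r + 1}) c := by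
  have hle : pairGap a p ≤ 2 * m := by
    have h := sub_le_of_pairGap_outside ha hspan (le_refl (2 * p)) (by omega) hp (Or.inl le_rfl)
    linarith
  obtain ⟨δ, hδ, hδ'⟩ : ∃ δ : ℕ, pairGap a p - m + 1 ≤ 4 * δ ∧ 4 * δ ≤ pairGap a p - m + 4 :=
    ⟨((pairGap a p - m + 4) / 4).toNat, by omega, by omega⟩
  obtain ⟨s, hs, hsp⟩ : ∃ s, s + δ ≤ m ∧ (s + δ < p ∨ p < s) := by
    by_cases h : δ < p
    · exact ⟨0, by omega, Or.inl (by omega)⟩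
    · exact ⟨p + 1, by omega, Or.inr (by omega)⟩
  refine ⟨s, s + δ, by omega, by omega, by omega, hs, _, ?_,
    (HasBalancedSplit.pair a (by omega)).union (HasBalancedSplit.pair a (by omega)) ?_⟩
  · have heven := sub_le_sub_of_strictMonoOn ha
      (show 2 * s ≤ 2 * (s + δ) by omega) (by omega)
    have hodd := sub_le_sub_of_strictMonoOn ha
      (show 2 * s + 1 ≤ 2 * (s + δ) + 1 by omega) (by omega)
    have heven' := sub_le_of_pairGap_outside ha hspan
      (show 2 * s ≤ 2 * (s + δ) by omega) (by omega) hp (by omega)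
    have hodd' := sub_le_of_pairGap_outside ha hspan
      (show 2 * s + 1 ≤ 2 * (s + δ) + 1 by omega) (by omega) hp (by omega)
    push_cast at heven hodd heven' hodd'
    rw [abs_le]
    constructor <;> omega
  · simp only [disjoint_left, mem_insert, mem_singleton]
    omega

theorem hasBalancedSplit_of_sum_erase_le (hm : 5 ≤ m)
    (hev : Even (∑ i ∈ range (2 * m + 2), a i)) (hp : p ∈ range (m + 1))
    (hsum : ∑ j ∈ (range (m + 1)).erase p, pairGap a j + 2 ≤ pairGap a p) :
    HasBalancedSplit a (range (2 * m + 2)) 0 := by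
  have h1 : ∀ j ∈ range (m + 1), 1 ≤ pairGap a j := fun j hj =>
    one_le_pairGap ha (by rw [mem_range] at hj; omega)
  have hge : (m : ℤ) ≤ ∑ j ∈ (range (m + 1)).erase p, pairGap a j := by
    have h := card_nsmul_le_sum ((range (m + 1)).erase p) _ _ fun j hj =>
      h1 j (mem_of_mem_erase hj)
    simpa [card_erase_of_mem hp] using h
  have htotal := sum_pairGap_le ha hspan
  rw [← sum_erase_add _ _ hp] at htotal
  have hpm : p ≤ m := by rw [mem_range] at hp; omega
  obtain ⟨s, r, hsp, hrp, hsr, hrm, c, hc, hquad⟩ :=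
    exists_hasBalancedSplit_near_pairGap ha hspan hm hpm (by linarith)
  have hs : s ∈ (range (m + 1)).erase p := mem_erase.mpr ⟨hsp, mem_range.mpr (by omega)⟩
  have hr : r ∈ (range (m + 1)).erase p := mem_erase.mpr ⟨hrp, mem_range.mpr (by omega)⟩
  set J : Finset ℕ := (range (m + 1)).erase p \ {s, r} with hJ
  have h1J : ∀ j ∈ J, 1 ≤ pairGap a j := fun j hj => h1 j (mem_of_mem_erase (sdiff_subset hj))
  have hcard : (#J : ℤ) = m - 2 := by
    have h := card_sdiff_pair_add_two hs hr hsr.ne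
    rw [card_erase_of_mem hp, card_range, ← hJ] at h
    omega
  have hJge : m - 2 ≤ ∑ j ∈ J, pairGap a j := by
    simpa only [nsmul_eq_mul, mul_one, hcard] using card_nsmul_le_sum _ _ _ h1J
  have hJle : ∑ j ∈ J, pairGap a j + 2 ≤ ∑ j ∈ (range (m + 1)).erase p, pairGap a j := by
    linarith [sum_sdiff_pair_add (pairGap a) hs hr hsr.ne, h1 s (mem_of_mem_erase hs),
      h1 r (mem_of_mem_erase hr)]
  obtain ⟨c', hc', hsplit⟩ := exists_abs_le_of_pairs (b := 1) (T := range (2 * m + 2))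
    (fun j hj => by linarith [h1J j hj])
    (fun q hq => le_add_sum_of_sum_lt le_rfl h1J (by rw [hcard]; linarith) hq)
    ((HasBalancedSplit.pair a (show 2 * p ≠ 2 * p + 1 by omega)).union hquad.neg (by
      simp only [disjoint_left, mem_union, mem_insert, mem_singleton]; omega))
    (fun i => by
      simp only [hJ, mem_union, mem_insert, mem_singleton, mem_sdiff, mem_erase, mem_range]; omega)
    (fun i => by
      simp only [hJ, mem_union, mem_insert, mem_singleton, mem_sdiff, mem_erase, mem_range]; omega)
    (by rw [← sub_eq_add_neg]; exact hc.trans (by linarith))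
  exact hsplit.zero_of_abs_le_one hev hc'

theorem hasBalancedSplit_range_of_strictMonoOn (hm : 5 ≤ m)
    (hev : Even (∑ i ∈ range (2 * m + 2), a i)) : HasBalancedSplit a (range (2 * m + 2)) 0 := by
  have h1 : ∀ j ∈ range (m + 1), 1 ≤ pairGap a j := fun j hj =>
    one_le_pairGap ha (by rw [mem_range] at hj; omega)
  have hsum : ∑ j ∈ range (m + 1), pairGap a j ≤ 3 * #(range (m + 1)) - 3 := by
    rw [card_range]
    push_cast
    linarith [sum_pairGap_le ha hspan]
  rcases le_add_sum_or_two_le_or_exists_sum_erase_le h1 hsum with h | h | ⟨p, hp, h⟩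
  · obtain ⟨c, hc, hsplit⟩ := exists_abs_le_of_pairs (T := range (2 * m + 2))
      (fun j hj => by linarith [h1 j hj]) h HasBalancedSplit.empty (by simp)
      (fun i => by simp only [notMem_empty, false_or, mem_range]; omega)
      (by rw [abs_zero]; linarith [sum_nonneg fun j hj => zero_le_one.trans (h1 j hj)])
    exact hsplit.zero_of_abs_le_one hev hc
  · exact hasBalancedSplit_of_two_le_pairGap ha hspan (by omega) hev h
  · exact hasBalancedSplit_of_sum_erase_le ha hspan hm hev hp h

end ConsecutivePairs

theorem HasBalancedSplit.of_even_sum_of_forall_le {A : Finset ℕ} {m : ℕ} (hm : 5 ≤ m)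
    (hA : #A = 2 * m + 2) (hspan : ∀ x ∈ A, ∀ y ∈ A, y ≤ x + 4 * m)
    (hev : Even (∑ x ∈ A, (x : ℤ))) : HasBalancedSplit (fun x : ℕ => (x : ℤ)) A 0 := by
  have hfin : (Set.ofPred (· ∈ A)).Finite := A.finite_toSet
  have hcard : #hfin.toFinset = 2 * m + 2 := by rw [← hA]; congr 1; ext; simp
  have hmono : StrictMonoOn (Nat.nth (· ∈ A)) (Set.Iio (2 * m + 2)) :=
    hcard ▸ Nat.nth_strictMonoOn hfin
  have himage : (range (2 * m + 2)).image (Nat.nth (· ∈ A)) = A := by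
    rw [← coe_inj, coe_image, coe_range, ← hcard, Nat.image_nth_Iio_card hfin]
    rfl
  have hinj : Set.InjOn (Nat.nth (· ∈ A)) (range (2 * m + 2)) := by
    rw [coe_range]
    exact hmono.injOn
  have hmem : ∀ i < 2 * m + 2, Nat.nth (· ∈ A) i ∈ A := fun i hi =>
    Nat.nth_mem_of_lt_card hfin (hcard ▸ hi)
  rw [← himage, image_iff hinj]
  refine hasBalancedSplit_range_of_strictMonoOn (fun i hi j hj hij => ?_) ?_ hm ?_
  · rw [Set.mem_Iic] at hi hj
    exact Int.ofNat_lt.mpr (hmono (Set.mem_Iio.mpr (by omega)) (Set.mem_Iio.mpr (by omega)) hij)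
  · have h := hspan _ (hmem 0 (by omega)) _ (hmem (2 * m + 1) (by omega))
    simp only [Function.comp_apply]
    omega
  · rwa [← himage, sum_image hinj] at hev

section DistMultiset

variable {V : Type*} {G : SimpleGraph V}

theorem eq_of_card_eq_of_sum_eq_of_mem {s t : Multiset ℕ} (hs : ∀ x ∈ s, x = 1 ∨ x = 2)
    (ht : ∀ x ∈ t, x = 1 ∨ x = 2) (hcard : s.card = t.card) (hsum : s.sum = t.sum) : s = t := by
  have hreplicate : ∀ u : Multiset ℕ, (∀ x ∈ u, x = 1 ∨ x = 2) →
      ∃ p q, u = Multiset.replicate p 1 + Multiset.replicate q 2 := fun u hu => by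
    refine ⟨u.count 1, u.count 2, ?_⟩
    rw [← Multiset.filter_eq', ← Multiset.filter_eq']
    nth_rw 1 [← Multiset.filter_add_not (· = 1) u]
    congr 1
    exact Multiset.filter_congr fun x hx => by have := hu x hx; omega
  obtain ⟨p, q, rfl⟩ := hreplicate s hs
  obtain ⟨p', q', rfl⟩ := hreplicate t ht
  simp only [Multiset.card_add, Multiset.card_replicate, Multiset.sum_add, Multiset.sum_replicate,
    smul_eq_mul] at hcard hsum
  rw [show p = p' by omega, show q = q' by omega]

theorem distMultiset_cons (G : SimpleGraph V) {x : V} {S : Finset V} (hx : x ∉ S) :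
    distMultiset G (cons x S hx) = S.val.map (G.dist x) + distMultiset G S := by
  classical
  have hdiag : ¬¬ s(x, x).IsDiag := not_not.mpr (Sym2.mk_isDiag_iff.mpr rfl)
  have hrow : Multiset.filter (fun p => ¬ p.IsDiag) (S.val.map fun y => s(x, y)) =
      S.val.map fun y => s(x, y) :=
    Multiset.filter_eq_self.mpr fun p hp => by
      obtain ⟨y, hy, rfl⟩ := Multiset.mem_map.mp hp
      rw [Sym2.mk_isDiag_iff]
      rintro rfl
      exact hx hy
  simp only [distMultiset, filter_val, sym2_val, cons_val, Multiset.sym2_cons, Multiset.map_cons,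
    Multiset.filter_add, Multiset.map_add]
  rw [Multiset.filter_cons_of_neg (p := fun p : Sym2 V => ¬ p.IsDiag) _ hdiag, hrow,
    Multiset.map_map]
  rfl

theorem card_distMultiset (G : SimpleGraph V) (S : Finset V) :
    (distMultiset G S).card = (#S).choose 2 := by
  induction S using Finset.cons_induction with
  | empty => rfl
  | cons x S hx ih =>
    rw [distMultiset_cons, Multiset.card_add, Multiset.card_map, card_val, ih, card_cons,
      Nat.choose_succ_succ', Nat.choose_one_right]

theorem two_mul_sum_distMultiset (G : SimpleGraph V) (S : Finset V) :
    2 * (distMultiset G S).sum = ∑ x ∈ S, ∑ y ∈ S, G.dist x y := by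
  induction S using Finset.cons_induction with
  | empty => rfl
  | cons x S hx ih =>
    have hrow : (S.val.map (G.dist x)).sum = ∑ y ∈ S, G.dist x y := rfl
    have hcol : ∑ y ∈ S, G.dist y x = ∑ y ∈ S, G.dist x y :=
      sum_congr rfl fun y _ => SimpleGraph.dist_comm
    rw [distMultiset_cons, Multiset.sum_add, hrow]
    simp only [sum_cons, sum_add_distrib, SimpleGraph.dist_self, hcol, ← ih]
    ring

end DistMultiset

section DistanceAtMostTwo

variable {V : Type*} {G : SimpleGraph V} (hG : G.Connected) (h2 : ∀ x y, G.dist x y ≤ 2)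
include hG h2

theorem eq_one_or_eq_two_of_mem_distMultiset {S : Finset V} {k : ℕ} (hk : k ∈ distMultiset G S) :
    k = 1 ∨ k = 2 := by
  classical
  obtain ⟨e, he, rfl⟩ := Multiset.mem_map.mp hk
  induction e using Sym2.ind with
  | _ x y =>
    have hpos := hG.pos_dist_of_ne (show x ≠ y by simpa using (mem_filter.mp he).2)
    have hle := h2 x y
    simp only [Sym2.lift_mk]
    omega

variable [Fintype V] [DecidableRel G.Adj]

theorem sum_dist_add_degree (x : V) :
    ∑ y, G.dist x y + G.degree x + 2 = 2 * Fintype.card V := by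
  classical
  have hterm : ∀ y, G.dist x y + (if G.Adj x y then 1 else 0) + (if x = y then 2 else 0) = 2 := by
    intro y
    have hle := h2 x y
    have hadj := SimpleGraph.dist_eq_one_iff_adj (G := G) (u := x) (v := y)
    have hzero := hG.dist_eq_zero_iff (u := x) (v := y)
    split_ifs <;> grind
  have hsum := Fintype.sum_congr _ _ hterm
  rw [sum_add_distrib, sum_add_distrib, ← card_filter, ← SimpleGraph.neighborFinset_eq_filter,
    SimpleGraph.card_neighborFinset_eq_degree, sum_ite_eq, if_pos (mem_univ x)] at hsum
  rw [hsum, sum_const, card_univ, smul_eq_mul, mul_comm]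

theorem homometric_compl [DecidableEq V] {S : Finset V} (hcard : 2 * #S = Fintype.card V)
    (hdeg : 2 * ∑ v ∈ S, G.degree v = ∑ v, G.degree v) : Homometric G S Sᶜ := by
  have hcompl : #Sᶜ = #S := by rw [card_compl]; omega
  have hrows : ∀ T : Finset V,
      ∑ x ∈ T, ∑ y ∈ S, G.dist x y + ∑ x ∈ T, ∑ y ∈ Sᶜ, G.dist x y + ∑ x ∈ T, G.degree x + #T * 2 =
        #T * (2 * Fintype.card V) := fun T => by
    rw [← smul_eq_mul, ← smul_eq_mul, ← sum_const, ← sum_const, ← sum_add_distrib,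
      ← sum_add_distrib, ← sum_add_distrib]
    exact sum_congr rfl fun x _ => by rw [sum_add_sum_compl, sum_dist_add_degree hG h2]
  have hcross : ∑ x ∈ S, ∑ y ∈ Sᶜ, G.dist x y = ∑ x ∈ Sᶜ, ∑ y ∈ S, G.dist x y := by
    rw [sum_comm]
    simp only [SimpleGraph.dist_comm]
  refine ⟨disjoint_compl_right, eq_of_card_eq_of_sum_eq_of_mem
    (fun k => eq_one_or_eq_two_of_mem_distMultiset hG h2)
    (fun k => eq_one_or_eq_two_of_mem_distMultiset hG h2) ?_ ?_⟩
  · rw [card_distMultiset, card_distMultiset, hcompl]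
  · have hS := hrows S
    have hSc := hrows Sᶜ
    rw [hcompl] at hSc
    have hdegc := sum_add_sum_compl S fun v => G.degree v
    have hsumS := two_mul_sum_distMultiset G S
    have hsumSc := two_mul_sum_distMultiset G Sᶜ
    omega

theorem homNumber_eq_of_hasBalancedSplit
    (h : HasBalancedSplit (fun v => (G.degree v : ℤ)) univ 0) :
    homNumber G = Fintype.card V / 2 := by
  classical
  obtain ⟨S, -, hcard, hdeg⟩ := h
  rw [card_univ] at hcard
  have hdeg' : 2 * ∑ v ∈ S, G.degree v = ∑ v, G.degree v := by
    zify
    simpa only [add_zero] using hdeg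
  have hhom : Homometric G S Sᶜ := homometric_compl hG h2 hcard hdeg'
  refine IsGreatest.csSup_eq ⟨⟨S, Sᶜ, hhom, by omega, by rw [card_compl]; omega⟩, ?_⟩
  rintro k ⟨S₁, S₂, ⟨hdisj, -⟩, rfl, hcard₂⟩
  have hle := card_le_univ (S₁.disjUnion S₂ hdisj)
  rw [card_disjUnion] at hle
  omega

end DistanceAtMostTwo

theorem hasBalancedSplit_degree {V : Type*} [Fintype V] {G : SimpleGraph V} [DecidableRel G.Adj]
    (hG : G.Connected) (heven : Even (Fintype.card V)) (hbig : 20 ≤ Fintype.card V)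
    (hodd : Fintype.card V / 2 < #(oddValues univ (G.degree ·))) :
    HasBalancedSplit (fun v => (G.degree v : ℤ)) univ 0 := by
  have hnontrivial : Nontrivial V := Fintype.one_lt_card_iff_nontrivial.mp (by omega)
  have hcard : Even #(oddValues univ (G.degree ·)) := by
    have h := even_sum_oddValues (S := univ) (d := (G.degree ·)) (f := 1) (by simpa using heven)
    simpa using h
  have hsum : Even (∑ k ∈ oddValues univ (G.degree ·), (k : ℤ)) :=
    even_sum_oddValues (f := Nat.cast) <| by
      rw [← Nat.cast_sum, G.sum_degrees_eq_twice_card_edges]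
      simp
  have hmem : ∀ k ∈ oddValues univ (G.degree ·), 1 ≤ k ∧ k < Fintype.card V := fun k hk => by
    obtain ⟨v, hv⟩ := card_pos.mp (mem_oddValues.mp hk).pos
    rw [← (mem_filter.mp hv).2]
    exact ⟨hG.preconnected.degree_pos_of_nontrivial v, G.degree_lt_card_verts v⟩
  obtain ⟨m, hm⟩ : ∃ m, #(oddValues univ (G.degree ·)) = 2 * m + 2 := by
    obtain ⟨r, hr⟩ := hcard
    exact ⟨r - 1, by omega⟩
  refine HasBalancedSplit.comp_of_oddValues
    (HasBalancedSplit.of_even_sum_of_forall_le (by omega) hm (fun x hx y hy => ?_) hsum)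
  have hx1 := (hmem x hx).1
  have hyn := (hmem y hy).2
  obtain ⟨r, hr⟩ := heven
  omega

theorem stmt14_general {V : Type*} [Fintype V] (G : SimpleGraph V) [DecidableRel G.Adj]
    (hG : G.Connected) (hdiam : G.diam ≤ 2) (heven : Even (Fintype.card V))
    (hbig : 20 ≤ Fintype.card V)
    (hcond :
      Fintype.card V / 2 < {i : ℕ | Odd #{v | G.degree v = i}}.ncard ∨
      ∀ i : ℕ, Even #{v | G.degree v = i}) :
    homNumber G = Fintype.card V / 2 := by
  have hnonempty : Nonempty V := hG.nonempty
  have h2 : ∀ x y, G.dist x y ≤ 2 := fun x y =>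
    (SimpleGraph.dist_le_diam (SimpleGraph.connected_iff_ediam_ne_top.mp hG)).trans hdiam
  refine homNumber_eq_of_hasBalancedSplit hG h2 ?_
  rcases hcond with h | h
  · have hset : {i : ℕ | Odd #{v | G.degree v = i}} = oddValues univ (G.degree ·) :=
      Set.ext fun i => mem_oddValues.symm
    rw [hset, Set.ncard_coe_finset] at h
    exact hasBalancedSplit_degree hG heven hbig h
  · exact HasBalancedSplit.of_even_fibers h Nat.cast

/-- Let `G` be connected of diameter `2` on an even number `n ≥ 90` of vertices and
let `V_i` be the set of vertices of degree `i`.  If either the number of indices `i`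
with `|V_i|` odd exceeds `n/2`, or every `|V_i|` is even, then `h(G) = n/2`. -/
theorem stmt14 {V : Type*} [Fintype V] [DecidableEq V] (G : SimpleGraph V)
    [DecidableRel G.Adj] (hG : G.Connected) (hdiam : G.diam = 2)
    (n : ℕ) (hn : Fintype.card V = n) (heven : Even n) (hbig : 90 ≤ n)
    (hcond :
      n / 2 < {i : ℕ | Odd (Finset.univ.filter fun v => G.degree v = i).card}.ncard ∨
      ∀ i : ℕ, Even (Finset.univ.filter fun v => G.degree v = i).card) :
    homNumber G = n / 2 := by
  subst hn
  exact stmt14_general G hG hdiam.le heven (by omega) hcond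
end

section
/- Let T be a tree, r ∈ V(T), and let S be an antichain in the r-order of T such that every vertex of S has a sibling in S. Partition S into its maximal sets of pairwise siblings, and let k′ be the number of these sets having odd size. Then 2·h(T) ≥ |S| − k′; consequently 2·h(T) ≥ (2/3)|S|. -/
open Finset

/-- The `r`-order of a tree: `x < y` iff `y ≠ x` and `y` lies on the (unique) path
from `x` to `r`. -/
def ROrderLt {V : Type*} (G : SimpleGraph V) (r x y : V) : Prop :=
  x ≠ y ∧ ∃ p : G.Walk x r, p.IsPath ∧ y ∈ p.support

/-- `p` is the parent of `x` in the `r`-order: `p` is adjacent to `x` and lies above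
`x`, i.e. `p` is the neighbor of `x` on the path from `x` to `r`. -/
def IsParentOf {V : Type*} (G : SimpleGraph V) (r p x : V) : Prop :=
  G.Adj x p ∧ ROrderLt G r x p

/-!
Siblings of the antichain `S` are indistinguishable by distance: they have the same distance to
every third vertex of `S`. Hence pairing off as many siblings as possible within each sibling class,
and putting one vertex of each pair into `A` and its partner into `B`, makes `A` and `B` homometric.
Only one vertex of each class of odd size stays unpaired, and such a class has at least three
elements.
-/

section Fibers

variable {α β : Type*} [DecidableEq β]

/-- The values `b` that `f` takes an odd number of times on `s`. For `f` the parent map on an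
antichain, these index the maximal sibling sets of odd size. -/
def oddFibers (s : Finset α) (f : α → β) : Finset β :=
  {b ∈ s.image f | Odd #{x ∈ s | f x = b}}

lemma exists_injOn_mapsTo_sdiff [DecidableEq α] (s : Finset α) :
    ∃ t ⊆ s, ∃ g : α → α, Set.InjOn g t ∧ Set.MapsTo g t ↑(s \ t) ∧ #s = 2 * #t + #s % 2 := by
  obtain rfl | ⟨a, -⟩ := s.eq_empty_or_nonempty
  · exact ⟨∅, subset_rfl, id, by simp⟩
  obtain ⟨t, hts, ht⟩ := exists_subset_card_eq (Nat.div_le_self #s 2)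
  have hle : #t ≤ #(s \ t) := by rw [card_sdiff_of_subset hts]; omega
  have : Nonempty α := ⟨a⟩
  obtain ⟨g, hmaps, hinj⟩ := t.finite_toSet.exists_injOn_of_encard_le
    (t := (↑(s \ t) : Set α)) (by simpa only [Set.encard_coe_eq_coe_finsetCard, Nat.cast_le])
  exact ⟨t, hts, g, hinj, hmaps, by omega⟩

lemma card_eq_two_mul_card_add_card_oddFibers {s t : Finset α} {f : α → β} (hts : t ⊆ s)
    (h : ∀ b, #{x ∈ s | f x = b} = 2 * #{x ∈ t | f x = b} + #{x ∈ s | f x = b} % 2) :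
    #s = 2 * #t + #(oddFibers s f) := by
  have hs : #s = ∑ b ∈ s.image f, #{x ∈ s | f x = b} := card_eq_sum_card_image f s
  have ht : #t = ∑ b ∈ s.image f, #{x ∈ t | f x = b} :=
    card_eq_sum_card_fiberwise fun _ hx ↦ mem_image_of_mem f (hts hx)
  have hodd : #(oddFibers s f) = ∑ b ∈ s.image f, #{x ∈ s | f x = b} % 2 := by
    rw [oddFibers, card_filter]
    exact sum_congr rfl fun b _ ↦ by grind
  rw [ht, hodd, mul_sum, ← sum_add_distrib, hs]
  exact sum_congr rfl fun b _ ↦ h b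

lemma exists_fiberwise_pairing [DecidableEq α] (s : Finset α) (f : α → β) :
    ∃ t ⊆ s, ∃ g : α → α, Set.InjOn g t ∧ Set.MapsTo g t ↑(s \ t) ∧ (∀ x ∈ t, f (g x) = f x) ∧
      #s = 2 * #t + #(oddFibers s f) := by
  choose T hT g hinj hmaps hcard using fun b ↦ exists_injOn_mapsTo_sdiff {x ∈ s | f x = b}
  let t : Finset α := {x ∈ s | x ∈ T (f x)}
  have hfiber (b : β) : {x ∈ t | f x = b} = T b := by
    ext x
    have := @hT b x
    grind
  have hg (x : α) (hx : x ∈ t) : g (f x) x ∈ s \ t ∧ f (g (f x) x) = f x := by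
    have hx' := hmaps (f x) (mem_filter.1 hx).2
    simp only [coe_sdiff, Set.mem_sdiff, mem_coe, mem_filter] at hx'
    exact ⟨by grind, hx'.1.2⟩
  refine ⟨t, filter_subset _ _, fun x ↦ g (f x) x, fun x hx y hy hxy ↦ ?_, fun x hx ↦ (hg x hx).1,
    fun x hx ↦ (hg x hx).2,
    card_eq_two_mul_card_add_card_oddFibers (filter_subset _ _) fun b ↦ by rw [hfiber, ← hcard]⟩
  have hf : f x = f y := by rw [← (hg x hx).2, ← (hg y hy).2]; exact congrArg f hxy
  refine hinj (f x) (mem_filter.1 hx).2 (hf ▸ (mem_filter.1 hy).2) ?_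
  simpa only [← hf] using hxy

lemma three_mul_card_oddFibers_le {s : Finset α} {f : α → β}
    (h : ∀ x ∈ s, ∃ y ∈ s, y ≠ x ∧ f y = f x) : 3 * #(oddFibers s f) ≤ #s := by
  have hfiber : ∀ b ∈ oddFibers s f, 3 ≤ #{x ∈ s | f x = b} := by
    intro b hb
    obtain ⟨hb, hodd⟩ := mem_filter.1 hb
    obtain ⟨x, hx, rfl⟩ := mem_image.1 hb
    obtain ⟨y, hy, hyx, hfy⟩ := h x hx
    have : 1 < #{z ∈ s | f z = f x} :=
      one_lt_card.2 ⟨y, mem_filter.2 ⟨hy, hfy⟩, x, mem_filter.2 ⟨hx, rfl⟩, hyx⟩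
    grind
  calc 3 * #(oddFibers s f) = #(oddFibers s f) • 3 := by rw [smul_eq_mul, mul_comm]
    _ ≤ ∑ b ∈ oddFibers s f, #{x ∈ s | f x = b} := card_nsmul_le_sum _ _ _ hfiber
    _ ≤ ∑ b ∈ s.image f, #{x ∈ s | f x = b} := sum_le_sum_of_subset (filter_subset _ _)
    _ = #s := (card_eq_sum_card_image f s).symm

end Fibers

section Homometric

variable {V W : Type*} {G : SimpleGraph V} {H : SimpleGraph W}

lemma distMultiset_image [DecidableEq W] {s : Finset V} {f : V → W} (hf : Set.InjOn f s)
    (hdist : ∀ x ∈ s, ∀ y ∈ s, x ≠ y → H.dist (f x) (f y) = G.dist x y) :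
    distMultiset H (s.image f) = distMultiset G s := by
  classical
  have hdiag : ∀ p ∈ s.val.sym2, ¬ (p.map f).IsDiag ↔ ¬ p.IsDiag := by
    rintro ⟨x, y⟩ hp
    obtain ⟨hx, hy⟩ := Multiset.mk_mem_sym2_iff.1 hp
    exact not_congr (hf.eq_iff hx hy)
  simp only [distMultiset, filter_val, sym2_val, image_val_of_injOn hf, Multiset.sym2_map,
    Multiset.filter_map, Multiset.map_map, Function.comp_def]
  refine Multiset.map_congr (by convert Multiset.filter_congr hdiag) ?_
  rintro ⟨x, y⟩ hp
  obtain ⟨hp, hxy⟩ := Multiset.mem_filter.1 hp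
  obtain ⟨hx, hy⟩ := Multiset.mk_mem_sym2_iff.1 hp
  exact hdist x hx y hy hxy

lemma Homometric.card_le_homNumber [Finite V] {s t : Finset V} (h : Homometric G s t)
    (hcard : #s = #t) : #s ≤ homNumber G := by
  have := Fintype.ofFinite V
  refine le_csSup ⟨Fintype.card V, ?_⟩ ⟨s, t, h, rfl, hcard.symm⟩
  rintro _ ⟨s', -, -, rfl, -⟩
  exact card_le_univ s'

/-- The vertices `x` and `y` cannot be told apart by their distances to the remaining vertices
of `S`. This is what makes the two vertices of a pair of siblings interchangeable. -/
def DistTwins (G : SimpleGraph V) (S : Finset V) (x y : V) : Prop :=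
  ∀ z ∈ S, z ≠ x → z ≠ y → G.dist z x = G.dist z y

lemma Homometric.of_distTwins [DecidableEq V] {S t : Finset V} {g : V → V} (htS : t ⊆ S)
    (hinj : Set.InjOn g t) (hmaps : Set.MapsTo g t ↑(S \ t))
    (htwins : ∀ x ∈ t, DistTwins G S x (g x)) : Homometric G t (t.image g) := by
  have hgS : ∀ x ∈ t, g x ∈ S := fun x hx ↦ (mem_sdiff.1 (hmaps hx)).1
  have hne : ∀ x ∈ t, ∀ y ∈ t, x ≠ g y := by
    rintro _ hx y hy rfl
    exact (mem_sdiff.1 (hmaps hy)).2 hx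
  refine ⟨disjoint_left.2 fun x hx hx' ↦ ?_,
    (distMultiset_image hinj fun x hx y hy hxy ↦ ?_).symm⟩
  · obtain ⟨y, hy, rfl⟩ := mem_image.1 hx'
    exact hne _ hx y hy rfl
  · calc G.dist (g x) (g y) = G.dist (g x) y :=
          (htwins y hy _ (hgS x hx) (hne y hy x hx).symm (hinj.ne hx hy hxy)).symm
      _ = G.dist y (g x) := G.dist_comm
      _ = G.dist y x := (htwins x hx y (htS hy) hxy.symm (hne y hy x hx)).symm
      _ = G.dist x y := G.dist_comm

lemma card_le_two_mul_homNumber_add_card_oddFibers [Finite V] [DecidableEq W]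
    {S : Finset V} {f : V → W}
    (htwins : ∀ x ∈ S, ∀ y ∈ S, f x = f y → DistTwins G S x y) :
    #S ≤ 2 * homNumber G + #(oddFibers S f) := by
  classical
  obtain ⟨t, htS, g, hinj, hmaps, hfg, hcard⟩ := exists_fiberwise_pairing S f
  have hhom : Homometric G t (t.image g) := .of_distTwins htS hinj hmaps fun x hx ↦
    htwins x (htS hx) (g x) (mem_sdiff.1 (hmaps hx)).1 (hfg x hx).symm
  have := hhom.card_le_homNumber (card_image_of_injOn hinj).symm
  omega

end Homometric

section Parent

variable {V : Type*} {G : SimpleGraph V} {r p q x y z : V}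

lemma length_eq_dist_of_isAcyclic (hG : G.IsAcyclic) {w : G.Walk x y} (hw : w.IsPath) :
    w.length = G.dist x y := by
  obtain ⟨v, hv, hlen⟩ := w.reachable.exists_path_of_dist
  have : w = v := congrArg Subtype.val ((hG.subsingleton_path x y).elim ⟨w, hw⟩ ⟨v, hv⟩)
  rw [this, hlen]

lemma IsParentOf.reachable (h : IsParentOf G r p x) : G.Reachable x r :=
  h.2.2.choose.reachable

lemma IsParentOf.unique (hG : G.IsAcyclic) (hp : IsParentOf G r p x) (hq : IsParentOf G r q x) :
    p = q := by
  obtain ⟨hxp, -, v, hv, hpv⟩ := hp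
  obtain ⟨hxq, -, w, hw, hqw⟩ := hq
  obtain rfl : v = w := congrArg Subtype.val ((hG.subsingleton_path x r).elim ⟨v, hv⟩ ⟨w, hw⟩)
  rw [hG.eq_snd_of_adj_start hv hxp hpv, hG.eq_snd_of_adj_start hv hxq hqw]

lemma ROrderLt.exists_walk_notMem_support (h : ROrderLt G r x y) :
    ∃ w : G.Walk y r, x ∉ w.support := by
  obtain ⟨hxy, w, hw, hy⟩ := h
  obtain ⟨u, v, -, -, rfl⟩ := hw.mem_support_iff_exists_append.1 hy
  exact ⟨v, fun hx ↦ hw.ne_of_mem_support_of_append hxy u.start_mem_support hx rfl⟩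

lemma IsParentOf.exists_isPath_notMem_support (h : IsParentOf G r p x) (hz : G.Reachable z r)
    (hzx : z ≠ x) (hlt : ¬ ROrderLt G r z x) :
    ∃ w : G.Walk z p, w.IsPath ∧ x ∉ w.support := by
  classical
  obtain ⟨u, hu⟩ := h.2.exists_walk_notMem_support
  obtain ⟨v, hv⟩ := hz.exists_isPath
  have hxv : x ∉ v.support := fun hx ↦ hlt ⟨hzx, v, hv, hx⟩
  refine ⟨(v.append u.reverse).bypass, SimpleGraph.Walk.bypass_isPath _, fun hx ↦ ?_⟩
  have := SimpleGraph.Walk.support_bypass_subset_support _ hx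
  simp only [SimpleGraph.Walk.mem_support_append_iff, SimpleGraph.Walk.support_reverse,
    List.mem_reverse, hxv, hu, or_self] at this

lemma IsParentOf.dist_eq_add_one (hG : G.IsAcyclic) (h : IsParentOf G r p x)
    (hz : G.Reachable z r) (hzx : z ≠ x) (hlt : ¬ ROrderLt G r z x) :
    G.dist z x = G.dist z p + 1 := by
  obtain ⟨w, hw, hx⟩ := h.exists_isPath_notMem_support hz hzx hlt
  rw [← length_eq_dist_of_isAcyclic hG (hw.concat hx h.1.symm), SimpleGraph.Walk.length_concat,
    length_eq_dist_of_isAcyclic hG hw]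

lemma IsParentOf.distTwins (hG : G.IsAcyclic) {S : Finset V}
    (hanti : ∀ z ∈ S, ∀ x ∈ S, ¬ ROrderLt G r z x) (hreach : ∀ z ∈ S, G.Reachable z r)
    (hx : x ∈ S) (hy : y ∈ S) (hpx : IsParentOf G r p x) (hpy : IsParentOf G r p y) :
    DistTwins G S x y := fun z hz hzx hzy ↦ by
  rw [hpx.dist_eq_add_one hG (hreach z hz) hzx (hanti z hz x hx),
    hpy.dist_eq_add_one hG (hreach z hz) hzy (hanti z hz y hy)]

lemma ncard_odd_siblings_eq_card_oddFibers [DecidableEq V] (hG : G.IsAcyclic) {S : Finset V}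
    {par : V → V} (hpar : ∀ x ∈ S, IsParentOf G r (par x) x) :
    {p : V | Odd {x : V | x ∈ S ∧ IsParentOf G r p x}.ncard}.ncard = #(oddFibers S par) := by
  have hfiber (p : V) :
      {x : V | x ∈ S ∧ IsParentOf G r p x} = ({x ∈ S | par x = p} : Finset V) := by
    ext x
    simp only [Set.mem_ofPred_eq, coe_filter]
    exact and_congr_right fun hx ↦ ⟨(hpar x hx).unique hG, fun hp ↦ hp ▸ hpar x hx⟩
  rw [← Set.ncard_coe_finset]
  congr 1
  ext p
  simp only [hfiber, Set.ncard_coe_finset]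
  simp only [oddFibers, coe_filter, mem_image, Set.mem_ofPred_eq]
  refine ⟨fun hodd ↦ ⟨?_, hodd⟩, And.right⟩
  obtain ⟨x, hx⟩ := card_pos.1 hodd.pos
  exact ⟨x, mem_filter.1 hx⟩

end Parent

theorem stmt16_general {V : Type*} [Finite V] (G : SimpleGraph V) (hG : G.IsAcyclic) (r : V)
    (S : Finset V)
    (hanti : ∀ x ∈ S, ∀ y ∈ S, ¬ ROrderLt G r x y)
    (hsib : ∀ x ∈ S, ∃ y ∈ S, y ≠ x ∧ ∃ p : V, IsParentOf G r p x ∧ IsParentOf G r p y)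
    (k' : ℕ)
    (hk' : k' = {p : V | Odd {x : V | x ∈ S ∧ IsParentOf G r p x}.ncard}.ncard) :
    (S.card : ℝ) - k' ≤ 2 * homNumber G ∧
      (2 / 3 : ℝ) * S.card ≤ 2 * homNumber G := by
  classical
  have hparent (x : V) : ∃ p, x ∈ S → IsParentOf G r p x := by
    by_cases hx : x ∈ S
    · obtain ⟨-, -, -, p, hp, -⟩ := hsib x hx
      exact ⟨p, fun _ ↦ hp⟩
    · exact ⟨x, fun h ↦ absurd h hx⟩
  choose par hpar using hparent
  have hcard : #S ≤ 2 * homNumber G + #(oddFibers S par) :=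
    card_le_two_mul_homNumber_add_card_oddFibers fun x hx y hy hxy ↦
      (hpar x hx).distTwins hG hanti (fun z hz ↦ (hpar z hz).reachable) hx hy (hxy ▸ hpar y hy)
  have hodd : 3 * #(oddFibers S par) ≤ #S := three_mul_card_oddFibers_le fun x hx ↦ by
    obtain ⟨y, hy, hyx, p, hpx, hpy⟩ := hsib x hx
    exact ⟨y, hy, hyx, ((hpar y hy).unique hG hpy).trans (hpx.unique hG (hpar x hx))⟩
  rw [hk', ncard_odd_siblings_eq_card_oddFibers hG hpar]
  rify at hcard hodd
  constructor <;> linarith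

/-- Let `T` be a tree, `r` a vertex, and `S` an antichain in the `r`-order such that
every vertex of `S` has a sibling in `S`.  If `k'` is the number of maximal sets of
pairwise siblings of `S` (that is, nonempty fibers of the parent map on `S`) having odd
size, then `2·h(T) ≥ |S| − k'`; consequently `2·h(T) ≥ (2/3)·|S|`. -/
theorem stmt16 {V : Type*} [Fintype V] (G : SimpleGraph V) (hT : G.IsTree) (r : V)
    (S : Finset V)
    (hanti : ∀ x ∈ S, ∀ y ∈ S, ¬ ROrderLt G r x y)
    (hsib : ∀ x ∈ S, ∃ y ∈ S, y ≠ x ∧ ∃ p : V, IsParentOf G r p x ∧ IsParentOf G r p y)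
    (k' : ℕ)
    (hk' : k' = {p : V | Odd {x : V | x ∈ S ∧ IsParentOf G r p x}.ncard}.ncard) :
    (S.card : ℝ) - k' ≤ 2 * homNumber G ∧
      (2 / 3 : ℝ) * S.card ≤ 2 * homNumber G := by
  exact stmt16_general G hT.isAcyclic r S hanti hsib k' hk'
end

section
/- For every tree T on n ≥ 2 vertices: (a) d₁(T) − bad(T) ≥ 2 + Σ_{i≥4} d_i(T); (b) d₁(T) ≥ (2/3)(n − d₂(T) − d₃(T)); and (c) Σ_{i≥4} d_i(T) ≤ (1/3)(n − d₂(T) − d₃(T)). -/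
open Finset

/-- `C` is a pendent path of the vertex `x`: a connected component of `G − x` that is a
path (equivalently, since `G` is a tree, each of its vertices has at most two neighbors
inside it). -/
def IsPendentPath {V : Type*} (G : SimpleGraph V) (x : V) (C : Set V) : Prop :=
  x ∉ C ∧ C.Nonempty ∧ (∀ y ∈ C, ∀ z : V, G.Adj y z → z ≠ x → z ∈ C) ∧
    (G.induce C).Connected ∧ ∀ y ∈ C, {z : V | z ∈ C ∧ G.Adj y z}.ncard ≤ 2

/-- A bad vertex: a vertex of degree at least `3` with an odd number of pendent paths. -/
def IsBadVertex {V : Type*} [Fintype V] (G : SimpleGraph V) [DecidableRel G.Adj]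
    (x : V) : Prop :=
  3 ≤ G.degree x ∧ Odd {C : Set V | IsPendentPath G x C}.ncard

/-!
Summing `deg v - 2` over all vertices gives `2|E| - 2|V|`. If no vertex is isolated, only leaves
contribute negatively, each `-1`; so as soon as `|E| < |V|`, as in a tree, the number of leaves
exceeds the sum of `deg v - 2` over the remaining vertices by at least two. In that sum a vertex of
degree at least `3` counts at least once and a vertex of degree at least `4` at least twice, whence
`2 + #{deg ≥ 4} + #{deg ≥ 3} ≤ d₁`. Bad vertices have degree at least `3`, which gives (a). Moreover
`n - d₂ - d₃` counts the leaves and the vertices of degree at least `4`, and the former are at least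
twice as many as the latter, which gives (b) and (c).
-/

section DegreeCounts

variable {V : Type*} [Fintype V] (G : SimpleGraph V) [DecidableRel G.Adj]

-- The subtraction is truncated, so leaves contribute `0` to the sum on the right.
theorem card_degree_eq_one_add_two_mul_card_edgeFinset (hpos : ∀ v, 0 < G.degree v) :
    #{v | G.degree v = 1} + 2 * #G.edgeFinset =
      2 * Fintype.card V + ∑ v, (G.degree v - 2) := by
  have hvertex (v : V) :
      (if G.degree v = 1 then 1 else 0) + G.degree v = 2 + (G.degree v - 2) := by
    have := hpos v
    split_ifs <;> omega
  calc #{v | G.degree v = 1} + 2 * #G.edgeFinset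
    _ = ∑ v, ((if G.degree v = 1 then 1 else 0) + G.degree v) := by
      rw [← G.sum_degrees_eq_twice_card_edges, card_filter, sum_add_distrib]
    _ = ∑ v, (2 + (G.degree v - 2)) := sum_congr rfl fun v _ ↦ hvertex v
    _ = 2 * Fintype.card V + ∑ v, (G.degree v - 2) := by
      rw [sum_add_distrib, sum_const, card_univ, smul_eq_mul, mul_comm]

theorem card_four_le_degree_add_card_three_le_degree_le_sum :
    #{v | 4 ≤ G.degree v} + #{v | 3 ≤ G.degree v} ≤ ∑ v, (G.degree v - 2) := by
  rw [card_filter, card_filter, ← sum_add_distrib]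
  refine sum_le_sum fun v _ ↦ ?_
  split_ifs <;> omega

theorem two_add_card_four_le_degree_add_card_three_le_degree_le_card_degree_eq_one
    (hpos : ∀ v, 0 < G.degree v) (hE : #G.edgeFinset < Fintype.card V) :
    2 + #{v | 4 ≤ G.degree v} + #{v | 3 ≤ G.degree v} ≤ #{v | G.degree v = 1} := by
  have hleaves := card_degree_eq_one_add_two_mul_card_edgeFinset G hpos
  have hexcess := card_four_le_degree_add_card_three_le_degree_le_sum G
  omega

theorem card_eq_sum_card_degree_of_degree_pos (hpos : ∀ v, 0 < G.degree v) :
    Fintype.card V = #{v | G.degree v = 1} + #{v | G.degree v = 2} + #{v | G.degree v = 3} +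
      #{v | 4 ≤ G.degree v} := by
  simp only [card_filter, ← sum_add_distrib]
  rw [← card_univ, card_eq_sum_ones]
  refine sum_congr rfl fun v _ ↦ ?_
  have := hpos v
  split_ifs <;> omega

theorem ncard_isBadVertex_le_ncard_three_le_degree :
    {x | IsBadVertex G x}.ncard ≤ {x | 3 ≤ G.degree x}.ncard :=
  Set.ncard_le_ncard fun _ hx ↦ hx.1

end DegreeCounts

theorem stmt18_general {V : Type*} [Fintype V] (G : SimpleGraph V) [DecidableRel G.Adj]
    (hpos : ∀ v, 0 < G.degree v) (hE : #G.edgeFinset < Fintype.card V)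
    (n : ℕ) (hn : Fintype.card V = n)
    (d : ℕ → ℕ) (hd : ∀ i, d i = {v : V | G.degree v = i}.ncard)
    (branch d4 : ℕ)
    (hbranch : branch = {x : V | 3 ≤ G.degree x}.ncard)
    (hd4 : d4 = {v : V | 4 ≤ G.degree v}.ncard) :
    ((2 : ℤ) + d4 ≤ (d 1 : ℤ) - branch) ∧
    ((2 / 3 : ℝ) * ((n : ℝ) - d 2 - d 3) ≤ d 1) ∧
    ((d4 : ℝ) ≤ (1 / 3 : ℝ) * ((n : ℝ) - d 2 - d 3)) := by
  simp only [Set.ncard_eq_toFinset_card', Set.toFinset_ofPred] at hd hbranch hd4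
  have hleaves : 2 + d4 + branch ≤ d 1 := by
    rw [hd, hbranch, hd4]
    exact two_add_card_four_le_degree_add_card_three_le_degree_le_card_degree_eq_one G hpos hE
  have hcount : n = d 1 + d 2 + d 3 + d4 := by
    rw [hd, hd, hd, hd4, ← hn]
    exact card_eq_sum_card_degree_of_degree_pos G hpos
  have hbranch_ge : d4 ≤ branch := by
    rw [hd4, hbranch]
    exact card_le_card (monotone_filter_right _ fun _ _ hv ↦ by omega)
  have htwice : 2 * (d4 : ℝ) ≤ d 1 := by
    exact_mod_cast (by omega : 2 * d4 ≤ d 1)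
  have hcount' : (n : ℝ) - d 2 - d 3 = d 1 + d4 := by
    rw [hcount]
    push_cast
    ring
  rw [hcount']
  exact ⟨by omega, by linarith, by linarith⟩

/-- For every tree `T` on `n ≥ 2` vertices, with `d_i` the number of vertices of
degree `i`: (a) `d₁ − bad(T) ≥ 2 + Σ_{i≥4} d_i`; (b) `d₁ ≥ (2/3)(n − d₂ − d₃)`;
(c) `Σ_{i≥4} d_i ≤ (1/3)(n − d₂ − d₃)`. -/
theorem stmt18 {V : Type*} [Fintype V] (G : SimpleGraph V) [DecidableRel G.Adj]
    (hT : G.IsTree) (n : ℕ) (hn : Fintype.card V = n) (h2 : 2 ≤ n)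
    (d : ℕ → ℕ) (hd : ∀ i, d i = {v : V | G.degree v = i}.ncard)
    (bad d4 : ℕ)
    (hbad : bad = {x : V | IsBadVertex G x}.ncard)
    (hd4 : d4 = {v : V | 4 ≤ G.degree v}.ncard) :
    ((2 : ℤ) + d4 ≤ (d 1 : ℤ) - bad) ∧
    ((2 / 3 : ℝ) * ((n : ℝ) - d 2 - d 3) ≤ d 1) ∧
    ((d4 : ℝ) ≤ (1 / 3 : ℝ) * ((n : ℝ) - d 2 - d 3)) := by
  have : Nontrivial V := Fintype.one_lt_card_iff_nontrivial.mp (hn ▸ h2)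
  have hbad_le := ncard_isBadVertex_le_ncard_three_le_degree G
  obtain ⟨ha, hbc⟩ := stmt18_general G
    (fun _ ↦ hT.connected.preconnected.degree_pos_of_nontrivial _)
    (Nat.lt_of_succ_le hT.card_edgeFinset.le) n hn d hd _ d4 rfl hd4
  exact ⟨by omega, hbc⟩
end

section
/- For every tree T on n ≥ 2 vertices, h(T) ≥ (n − d₂(T) − 4·d₃(T))/6 and h(T) ≥ (n − d₁(T) − d₂(T))/(2·diam(T)). -/
open Finset

/-! Pair up siblings. Root the tree at `r` and let `A` be a set of non-root vertices such that no
parent of a member of `A` is a descendant of a member of `A`. Two distinct members of `A` are then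
joined through both their parents, so their distance is the distance of the parents plus two.
Splitting the children in `A` of every vertex into two halves therefore yields two homometric sets.

For the second bound, take `A` to be a whole layer of the tree rooted at a central vertex: every
vertex of degree at least three in the layer above contributes a pair. For the first bound, take `A`
to be the top vertices of the legs, that is, of the pendant paths ending at a vertex of degree at
least three. There is one leg for each leaf, and by the degree sum the leaves are numerous enough
for the loss from rounding in the halving to be covered by the degrees. -/

section Homometric

variable {V : Type*} {G : SimpleGraph V}

theorem distMultiset_map_congr {ι : Type*} {s : Finset ι} {α β : ι ↪ V}
    (h : ∀ i ∈ s, ∀ j ∈ s, G.dist (α i) (α j) = G.dist (β i) (β j)) :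
    distMultiset G (s.map α) = distMultiset G (s.map β) := by
  classical
  have distMultiset_map (γ : ι ↪ V) : distMultiset G (s.map γ) =
      (s.sym2.filter fun p => ¬ p.IsDiag).val.map
        (Sym2.lift ⟨fun i j => G.dist (γ i) (γ j), fun _ _ => SimpleGraph.dist_comm⟩) := by
    unfold distMultiset
    rw [sym2_map, filter_map, map_val, Multiset.map_map]
    refine Multiset.map_congr ?_ fun p _ => ?_
    · congr 1
      exact filter_congr fun p _ => not_congr (Sym2.isDiag_map γ.injective)
    · induction p with | _ i j => rfl
  rw [distMultiset_map, distMultiset_map]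
  refine Multiset.map_congr rfl fun p hp => ?_
  induction p with
  | _ i j =>
    obtain ⟨hi, hj⟩ := mk_mem_sym2_iff.1 (mem_filter.1 hp).1
    exact h i hi j hj

theorem card_le_homNumber [Finite V] {ι : Type*} [Fintype ι] (γ : ι ⊕ ι ↪ V)
    (h : ∀ i j, G.dist (γ (.inl i)) (γ (.inl j)) = G.dist (γ (.inr i)) (γ (.inr j))) :
    Fintype.card ι ≤ homNumber G := by
  have := Fintype.ofFinite V
  refine le_csSup ⟨Fintype.card V, ?_⟩ ⟨univ.map (.trans .inl γ), univ.map (.trans .inr γ),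
    ⟨?_, distMultiset_map_congr fun i _ j _ => h i j⟩, card_map _, card_map _⟩
  · rintro _ ⟨S, -, -, rfl, -⟩
    exact card_le_univ S
  · simp [disjoint_left]

theorem one_le_homNumber [Finite V] [Nontrivial V] : 1 ≤ homNumber G := by
  obtain ⟨u, v, huv⟩ := exists_pair_ne V
  let γ : Unit ⊕ Unit ↪ V := ⟨Sum.elim (fun _ => u) (fun _ => v), by
    rintro (_ | _) (_ | _) h <;> simp_all⟩
  exact card_le_homNumber γ fun _ _ => by simp

theorem sum_card_fiber_div_two_le_homNumber [Finite V] {ι : Type*} [Fintype ι] [DecidableEq ι]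
    (A : Finset V) (π : V → ι) (D : ι → ι → ℕ)
    (hD : ∀ a ∈ A, ∀ b ∈ A, a ≠ b → G.dist a b = D (π a) (π b)) :
    ∑ x, #{a ∈ A | π a = x} / 2 ≤ homNumber G := by
  let k (x : ι) : ℕ := #{a ∈ A | π a = x} / 2
  have (x : ι) : Nonempty (Fin (k x) ⊕ Fin (k x) ↪ {a ∈ A | π a = x}) :=
    Function.Embedding.nonempty_of_card_le <| by
      simp only [Fintype.card_sum, Fintype.card_fin, Fintype.card_coe, k]
      omega
  let γ (x : ι) : Fin (k x) ⊕ Fin (k x) ↪ {a ∈ A | π a = x} := (this x).some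
  have hγ (p : Σ x, Fin (k x) ⊕ Fin (k x)) : (γ p.1 p.2 : V) ∈ A ∧ π (γ p.1 p.2) = p.1 :=
    mem_filter.1 (γ p.1 p.2).2
  let Γ : (Σ x, Fin (k x) ⊕ Fin (k x)) ↪ V := ⟨fun p => γ p.1 p.2, fun p q hpq => by
    have hfst : p.1 = q.1 := by rw [← (hγ p).2, ← (hγ q).2]; exact congrArg π hpq
    obtain ⟨x, s⟩ := p
    obtain ⟨y, t⟩ := q
    obtain rfl : x = y := hfst
    exact congrArg (Sigma.mk x) ((γ x).injective (Subtype.ext hpq))⟩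
  have hΓ (p q : Σ x, Fin (k x) ⊕ Fin (k x)) (hpq : p ≠ q) :
      G.dist (Γ p) (Γ q) = D p.1 q.1 :=
    (hD _ (hγ p).1 _ (hγ q).1 (Γ.injective.ne hpq)).trans (by rw [(hγ p).2, (hγ q).2])
  let split := (Equiv.sigmaSumDistrib (fun x => Fin (k x)) fun x => Fin (k x)).symm
  calc ∑ x, k x = Fintype.card (Σ x, Fin (k x)) := by simp
    _ ≤ homNumber G := card_le_homNumber (split.toEmbedding.trans Γ) fun i j => by
      obtain rfl | hij := eq_or_ne i j
      · simp
      · have hl : split (.inl i) ≠ split (.inl j) := by simpa using hij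
        have hr : split (.inr i) ≠ split (.inr j) := by simpa using hij
        exact (hΓ _ _ hl).trans (hΓ _ _ hr).symm

end Homometric

section TreeMetric

variable {V : Type*} {G : SimpleGraph V} {a r u v w x y z : V}

theorem exists_adj_dist_eq_dist_add_one (hG : G.Connected) (hv : v ≠ r) :
    ∃ u, G.Adj v u ∧ G.dist r v = G.dist r u + 1 := by
  obtain ⟨p, hp⟩ := hG.exists_walk_length_eq_dist v r
  cases p with
  | nil => exact absurd rfl hv
  | @cons _ u _ hvu q =>
    refine ⟨u, hvu, ?_⟩
    have hle : G.dist r v ≤ G.dist r u + G.dist u v := hG.dist_triangle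
    have hq := SimpleGraph.dist_le q
    rw [SimpleGraph.Walk.length_cons] at hp
    rw [SimpleGraph.dist_eq_one_iff_adj.2 hvu.symm] at hle
    rw [SimpleGraph.dist_comm] at hp hq
    omega

theorem dist_lt_dist_of_mem_support (hG : G.Connected) {p : G.Walk y a}
    (hp : p.length = G.dist y a) (hw : w ∈ p.support) (hy : G.dist y a < G.dist y x) :
    G.dist w a < G.dist w x := by
  classical
  have hlen : (p.takeUntil w hw).length + (p.dropUntil w hw).length = p.length := by
    rw [← SimpleGraph.Walk.length_append, SimpleGraph.Walk.take_spec]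
  have htake := SimpleGraph.dist_le (p.takeUntil w hw)
  have hdrop := SimpleGraph.dist_le (p.dropUntil w hw)
  have hle : G.dist y x ≤ G.dist y w + G.dist w x := hG.dist_triangle
  omega

theorem length_eq_dist_of_isPath (hG : G.IsTree) {p : G.Walk u v} (hp : p.IsPath) :
    p.length = G.dist u v := by
  obtain ⟨q, hq, hlen⟩ := hG.connected.exists_path_of_dist u v
  rw [(hG.existsUnique_path u v).unique hp hq, hlen]

theorem dist_eq_add_of_adj_of_dist_lt (hG : G.IsTree) (hax : G.Adj a x)
    (hy : G.dist y a < G.dist y x) (hz : G.dist z x < G.dist z a) :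
    G.dist y z = G.dist y a + 1 + G.dist x z := by
  obtain ⟨p, hp, hpl⟩ := hG.connected.exists_path_of_dist y a
  obtain ⟨q, hq, hql⟩ := hG.connected.exists_path_of_dist z x
  -- The vertices of `p` are closer to `a`, those of `q` closer to `x`, so `p` and `q` are disjoint.
  have hpath : (p.append (.cons hax q.reverse)).IsPath := by
    rw [SimpleGraph.Walk.isPath_def, SimpleGraph.Walk.support_append,
      SimpleGraph.Walk.support_cons, List.tail_cons, SimpleGraph.Walk.support_reverse]
    refine hp.support_nodup.append (List.nodup_reverse.2 hq.support_nodup) fun w hwp hwq => ?_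
    exact (dist_lt_dist_of_mem_support hG.connected hpl hwp hy).asymm
      (dist_lt_dist_of_mem_support hG.connected hql (List.mem_reverse.1 hwq) hz)
  rw [← length_eq_dist_of_isPath hG hpath, SimpleGraph.Walk.length_append,
    SimpleGraph.Walk.length_cons, SimpleGraph.Walk.length_reverse, hpl, hql,
    SimpleGraph.dist_comm (u := z)]
  omega

theorem eq_of_adj_of_dist_eq_dist_add_one (hG : G.IsTree) (hu : G.Adj v u) (hw : G.Adj v w)
    (hru : G.dist r v = G.dist r u + 1) (hrw : G.dist r v = G.dist r w + 1) : u = w := by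
  by_contra huw
  have hnadj : ¬ G.Adj w u := fun h => hG.dist_ne_of_adj r h (by omega)
  have hwv : G.dist w v = 1 := SimpleGraph.dist_eq_one_iff_adj.2 hw.symm
  have hvw : G.dist v w = 1 := SimpleGraph.dist_eq_one_iff_adj.2 hw
  have hwu : 1 < G.dist w u :=
    hG.connected.one_lt_dist_of_ne_of_not_adj (Ne.symm huw) hnadj
  have hrw' : G.dist r w = G.dist r u + 1 + G.dist v w :=
    dist_eq_add_of_adj_of_dist_lt hG hu.symm (by omega) (by omega)
  omega

theorem sum_degree_add_two [Fintype V] [DecidableRel G.Adj] (hG : G.IsTree) :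
    ∑ v, G.degree v + 2 = 2 * Fintype.card V := by
  rw [G.sum_degrees_eq_twice_card_edges, ← hG.card_edgeFinset]
  omega

end TreeMetric

section Rooted

variable {V : Type*} {G : SimpleGraph V} {a b r u v x y : V}

open scoped Classical in
/-- The parent of `v` in the tree `G` rooted at `r`: a neighbour of `v` one step closer to `r`.
The root is its own parent. -/
noncomputable def rootedParent (G : SimpleGraph V) (r v : V) : V :=
  if h : ∃ u, G.Adj v u ∧ G.dist r v = G.dist r u + 1 then h.choose else v

/-- `y` is a descendant of `a` in the tree `G` rooted at `r`, that is, `a` lies on the path from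
`r` to `y`. Every vertex is a descendant of itself. -/
def IsRootedDescendant (G : SimpleGraph V) (r y a : V) : Prop :=
  G.dist r y = G.dist r a + G.dist a y

theorem rootedParent_spec (hG : G.Connected) (hv : v ≠ r) :
    G.Adj v (rootedParent G r v) ∧ G.dist r v = G.dist r (rootedParent G r v) + 1 := by
  have h := exists_adj_dist_eq_dist_add_one hG hv
  rw [rootedParent, dif_pos h]
  exact h.choose_spec

theorem rootedParent_eq (hG : G.IsTree) (hvu : G.Adj v u) (h : G.dist r v = G.dist r u + 1) :
    rootedParent G r v = u := by
  have hv : v ≠ r := by rintro rfl; simp at h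
  obtain ⟨hadj, hdist⟩ := rootedParent_spec hG.connected hv
  exact eq_of_adj_of_dist_eq_dist_add_one hG hadj hvu hdist h

theorem dist_eq_dist_rootedParent_add_one (hG : G.IsTree) (ha : a ≠ r)
    (hy : ¬ IsRootedDescendant G r y a) :
    G.dist y a = G.dist y (rootedParent G r a) + 1 := by
  obtain ⟨hadj, hdist⟩ := rootedParent_spec hG.connected ha
  refine (hG.dist_eq_dist_add_one_of_adj y hadj).resolve_right fun hfar => hy ?_
  have hnear : G.dist r (rootedParent G r a) < G.dist r a := by omega
  have hyr := dist_eq_add_of_adj_of_dist_lt hG hadj (by omega : G.dist y a < _) hnear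
  rw [SimpleGraph.dist_comm (u := y) (v := r), SimpleGraph.dist_comm (u := y) (v := a),
    SimpleGraph.dist_comm (u := rootedParent G r a)] at hyr
  rw [IsRootedDescendant]
  omega

theorem dist_eq_dist_rootedParent_add_two (hG : G.IsTree) (ha : a ≠ r) (hb : b ≠ r) (hab : a ≠ b)
    (hba : ¬ IsRootedDescendant G r (rootedParent G r b) a)
    (hab' : ¬ IsRootedDescendant G r (rootedParent G r a) b) :
    G.dist a b = G.dist (rootedParent G r a) (rootedParent G r b) + 2 := by
  have hadj := (rootedParent_spec hG.connected ha).1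
  have hab₁ := dist_eq_dist_rootedParent_add_one hG ha hba
  have hba₁ := dist_eq_dist_rootedParent_add_one hG hb hab'
  have hbb := SimpleGraph.dist_eq_one_iff_adj.2 (rootedParent_spec hG.connected hb).1
  have hpos := hG.connected.pos_dist_of_ne hab.symm
  have hstep : G.dist b a = G.dist b (rootedParent G r a) + 1 := by
    refine (hG.dist_eq_dist_add_one_of_adj b hadj).resolve_right fun hfar => ?_
    have := dist_eq_add_of_adj_of_dist_lt (y := b) (z := rootedParent G r b) hG hadj
      (by omega) (by omega)
    omega
  rw [SimpleGraph.dist_comm, hstep, SimpleGraph.dist_comm, hba₁]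

theorem sum_card_siblings_div_two_le_homNumber [Fintype V] [DecidableEq V] (hG : G.IsTree)
    {A : Finset V} (hr : r ∉ A)
    (hA : ∀ a ∈ A, ∀ b ∈ A, ¬ IsRootedDescendant G r (rootedParent G r b) a) :
    ∑ x, #{a ∈ A | rootedParent G r a = x} / 2 ≤ homNumber G :=
  sum_card_fiber_div_two_le_homNumber A (rootedParent G r) (fun x y => G.dist x y + 2)
    fun _ ha _ hb hab => dist_eq_dist_rootedParent_add_two hG (ne_of_mem_of_not_mem ha hr)
      (ne_of_mem_of_not_mem hb hr) hab (hA _ ha _ hb) (hA _ hb _ ha)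

variable [Fintype V] [DecidableEq V]

/-- The children of `x` in the tree `G` rooted at `r`. -/
noncomputable def rootedChildren (G : SimpleGraph V) (r x : V) : Finset V :=
  {a | a ≠ r ∧ rootedParent G r a = x}

theorem mem_rootedChildren : a ∈ rootedChildren G r x ↔ a ≠ r ∧ rootedParent G r a = x := by
  simp [rootedChildren]

theorem mem_rootedChildren_iff_adj (hG : G.IsTree) :
    a ∈ rootedChildren G r x ↔ G.Adj x a ∧ G.dist r a = G.dist r x + 1 := by
  rw [mem_rootedChildren]
  constructor
  · rintro ⟨ha, rfl⟩
    obtain ⟨hadj, hdist⟩ := rootedParent_spec hG.connected ha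
    exact ⟨hadj.symm, hdist⟩
  · rintro ⟨hadj, hdist⟩
    exact ⟨by rintro rfl; simp at hdist, rootedParent_eq hG hadj.symm hdist⟩

theorem exists_mem_rootedChildren_isRootedDescendant (hG : G.IsTree)
    (hy : IsRootedDescendant G r y a) (hya : y ≠ a) :
    ∃ c ∈ rootedChildren G r a, IsRootedDescendant G r y c := by
  obtain ⟨c, hac, hc⟩ := exists_adj_dist_eq_dist_add_one hG.connected hya.symm
  have hry : G.dist r y ≤ G.dist r c + G.dist c y := hG.connected.dist_triangle
  have hrc := hG.dist_eq_dist_add_one_of_adj r hac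
  rw [SimpleGraph.dist_comm, SimpleGraph.dist_comm (v := c)] at hc
  unfold IsRootedDescendant at hy ⊢
  exact ⟨c, (mem_rootedChildren_iff_adj hG).2 ⟨hac, by omega⟩, by omega⟩

variable [DecidableRel G.Adj]

theorem card_rootedChildren_root (hG : G.IsTree) : #(rootedChildren G r r) = G.degree r := by
  rw [← G.card_neighborFinset_eq_degree]
  congr 1
  ext a
  rw [mem_rootedChildren_iff_adj hG, SimpleGraph.mem_neighborFinset, SimpleGraph.dist_self,
    zero_add, SimpleGraph.dist_eq_one_iff_adj, and_self]

theorem card_rootedChildren_add_one (hG : G.IsTree) (hx : x ≠ r) :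
    #(rootedChildren G r x) + 1 = G.degree x := by
  obtain ⟨hadj, hdist⟩ := rootedParent_spec hG.connected hx
  have hnot : rootedParent G r x ∉ rootedChildren G r x := by
    rw [mem_rootedChildren_iff_adj hG]
    omega
  rw [← G.card_neighborFinset_eq_degree, ← card_insert_of_notMem hnot]
  congr 1
  ext a
  rw [mem_insert, mem_rootedChildren_iff_adj hG, SimpleGraph.mem_neighborFinset]
  refine ⟨?_, fun hxa => ?_⟩
  · rintro (rfl | ⟨hxa, -⟩)
    exacts [hadj, hxa]
  · obtain hup | hdown := hG.dist_eq_dist_add_one_of_adj r hxa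
    · exact .inl (rootedParent_eq hG hxa hup).symm
    · exact .inr ⟨hxa, hdown⟩

theorem degree_le_card_rootedChildren_add_one (hG : G.IsTree) (r x : V) :
    G.degree x ≤ #(rootedChildren G r x) + 1 := by
  obtain rfl | hx := eq_or_ne x r
  · exact (card_rootedChildren_root hG).ge.trans (Nat.le_succ _)
  · exact (card_rootedChildren_add_one hG hx).ge

end Rooted

section Layers

variable {V : Type*} [Fintype V] {G : SimpleGraph V} [DecidableRel G.Adj]

theorem card_three_le_degree_layer_le_homNumber (hG : G.IsTree) (r : V) (k : ℕ) :
    #{v | 3 ≤ G.degree v ∧ G.dist r v = k} ≤ homNumber G := by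
  classical
  let A : Finset V := {a | a ≠ r ∧ G.dist r (rootedParent G r a) = k}
  have hA (a : V) (ha : a ∈ A) (b : V) (hb : b ∈ A) :
      ¬ IsRootedDescendant G r (rootedParent G r b) a := by
    obtain ⟨har, hak⟩ := (mem_filter_univ a).1 ha
    obtain ⟨-, hbk⟩ := (mem_filter_univ b).1 hb
    have := (rootedParent_spec hG.connected har).2
    unfold IsRootedDescendant
    omega
  calc #{v | 3 ≤ G.degree v ∧ G.dist r v = k}
      = ∑ x, if 3 ≤ G.degree x ∧ G.dist r x = k then 1 else 0 := card_filter _ _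
    _ ≤ ∑ x, #{a ∈ A | rootedParent G r a = x} / 2 := sum_le_sum fun x _ => by
      split_ifs with hx
      · have hsub : rootedChildren G r x ⊆ {a ∈ A | rootedParent G r a = x} := fun a ha => by
          obtain ⟨har, rfl⟩ := mem_rootedChildren.1 ha
          simp [A, har, hx.2]
        have hcard := card_le_card hsub
        have hdeg := degree_le_card_rootedChildren_add_one hG r x
        omega
      · exact Nat.zero_le _
    _ ≤ homNumber G := sum_card_siblings_div_two_le_homNumber hG (by simp [A]) hA

theorem card_three_le_degree_le_mul_homNumber (hG : G.IsTree) {r : V} {e : ℕ}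
    (he : ∀ v, G.dist r v ≤ e) : #{v | 3 ≤ G.degree v} ≤ e * homNumber G := by
  classical
  have hlt (v : V) (hv : 3 ≤ G.degree v) : G.dist r v < e := by
    have hdeg := degree_le_card_rootedChildren_add_one hG r v
    obtain ⟨c, hc⟩ : (rootedChildren G r v).Nonempty := card_pos.1 (by omega)
    have hdist := ((mem_rootedChildren_iff_adj hG).1 hc).2
    have hc := he c
    omega
  calc #{v | 3 ≤ G.degree v}
      = ∑ k ∈ range e, #{v | 3 ≤ G.degree v ∧ G.dist r v = k} := by
        simp_rw [← filter_filter]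
        exact card_eq_sum_card_fiberwise fun v hv => by simpa using hlt v (by simpa using hv)
    _ ≤ #(range e) • homNumber G :=
        sum_le_card_nsmul _ _ _ fun k _ => card_three_le_degree_layer_le_homNumber hG r k
    _ = e * homNumber G := by rw [card_range, smul_eq_mul]

theorem card_three_le_degree_le_radius_mul_homNumber (hG : G.IsTree) :
    #{v | 3 ≤ G.degree v} ≤ G.radius.toNat * homNumber G := by
  have := hG.connected.nonempty
  obtain ⟨c, hc⟩ := G.exists_eccent_eq_radius
  refine card_three_le_degree_le_mul_homNumber hG (r := c) fun v => ?_
  exact ENat.toNat_le_toNat (hc ▸ SimpleGraph.edist_le_eccent)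
    (SimpleGraph.radius_ne_top_iff.2 hG.connected)

end Layers

section Legs

variable {V : Type*} [Fintype V] {G : SimpleGraph V} [DecidableRel G.Adj] {a r : V}

open scoped Classical in
/-- The vertices on the legs (pendant paths) of the tree `G` rooted at `r`: the non-root vertices
all of whose descendants have degree at most two. -/
noncomputable def legVertices (G : SimpleGraph V) [DecidableRel G.Adj] (r : V) : Finset V :=
  {a | a ≠ r ∧ ∀ y, IsRootedDescendant G r y a → G.degree y ≤ 2}

/-- The top vertices of the legs of the tree `G` rooted at `r`, one for each leg: the leg vertices
whose parent has degree at least three. -/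
noncomputable def legTops (G : SimpleGraph V) [DecidableRel G.Adj] (r : V) : Finset V :=
  {a ∈ legVertices G r | 3 ≤ G.degree (rootedParent G r a)}

theorem mem_legVertices : a ∈ legVertices G r ↔
    a ≠ r ∧ ∀ y, IsRootedDescendant G r y a → G.degree y ≤ 2 := by
  simp [legVertices]

theorem mem_legVertices_of_degree_eq_one (hG : G.IsTree) (har : a ≠ r) (ha : G.degree a = 1) :
    a ∈ legVertices G r := by
  classical
  refine mem_legVertices.2 ⟨har, fun y hy => ?_⟩
  obtain rfl | hya := eq_or_ne y a
  · omega
  · obtain ⟨c, hc, -⟩ := exists_mem_rootedChildren_isRootedDescendant hG hy hya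
    have hcard := card_rootedChildren_add_one hG har
    have hpos := card_pos.2 ⟨c, hc⟩
    omega

theorem eq_of_rootedParent_eq_of_degree_le_two (hG : G.IsTree) (hr : 3 ≤ G.degree r) {b : V}
    (har : a ≠ r) (hbr : b ≠ r)
    (hab : rootedParent G r a = rootedParent G r b) (hdeg : G.degree (rootedParent G r a) ≤ 2) :
    a = b := by
  classical
  have hpr : rootedParent G r a ≠ r := by intro h; rw [h] at hdeg; omega
  have hcard := card_rootedChildren_add_one hG hpr
  exact card_le_one.1 (by omega) a (mem_rootedChildren.2 ⟨har, rfl⟩) b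
    (mem_rootedChildren.2 ⟨hbr, hab.symm⟩)

theorem rootedParent_mem_legVertices (hG : G.IsTree) (hr : 3 ≤ G.degree r)
    (ha : a ∈ legVertices G r) (hdeg : G.degree (rootedParent G r a) ≤ 2) :
    rootedParent G r a ∈ legVertices G r ∧ G.degree (rootedParent G r a) = 2 := by
  classical
  obtain ⟨har, hdesc⟩ := mem_legVertices.1 ha
  have hpr : rootedParent G r a ≠ r := by intro h; rw [h] at hdeg; omega
  have hcard := card_rootedChildren_add_one hG hpr
  have hachild : a ∈ rootedChildren G r (rootedParent G r a) :=
    mem_rootedChildren.2 ⟨har, rfl⟩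
  have hpos := card_pos.2 ⟨a, hachild⟩
  refine ⟨mem_legVertices.2 ⟨hpr, fun y hy => ?_⟩, by omega⟩
  obtain rfl | hya := eq_or_ne y (rootedParent G r a)
  · exact hdeg
  · obtain ⟨c, hc, hyc⟩ := exists_mem_rootedChildren_isRootedDescendant hG hy hya
    obtain ⟨hcr, hca⟩ := mem_rootedChildren.1 hc
    obtain rfl := eq_of_rootedParent_eq_of_degree_le_two hG hr har hcr hca.symm hdeg
    exact hdesc y hyc

-- Sending a leg vertex that is not a top to its parent is injective into the leg vertices of degree
-- two, which leaves at least as many tops as leaves.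
theorem card_degree_eq_one_le_card_legTops (hG : G.IsTree) (hr : 3 ≤ G.degree r) :
    #{v | G.degree v = 1} ≤ #(legTops G r) := by
  classical
  have hleaf : #{v | G.degree v = 1} ≤ #{a ∈ legVertices G r | ¬ G.degree a = 2} := by
    refine card_le_card fun a ha => ?_
    have ha : G.degree a = 1 := (mem_filter_univ a).1 ha
    have har : a ≠ r := by rintro rfl; omega
    exact mem_filter.2 ⟨mem_legVertices_of_degree_eq_one hG har ha, by omega⟩
  have hinj : #{a ∈ legVertices G r | ¬ 3 ≤ G.degree (rootedParent G r a)} ≤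
      #{a ∈ legVertices G r | G.degree a = 2} := by
    refine card_le_card_of_injOn (rootedParent G r) (fun a ha => ?_) fun a ha b hb hab => ?_
    · obtain ⟨haL, hdeg⟩ := mem_filter.1 ha
      exact mem_filter.2 (rootedParent_mem_legVertices hG hr haL (by omega))
    · obtain ⟨haL, hdeg⟩ := mem_filter.1 ha
      obtain ⟨hbL, -⟩ := mem_filter.1 hb
      exact eq_of_rootedParent_eq_of_degree_le_two hG hr (mem_legVertices.1 haL).1
        (mem_legVertices.1 hbL).1 hab (by omega)
  have htops : #(legTops G r) + #{a ∈ legVertices G r | ¬ 3 ≤ G.degree (rootedParent G r a)} =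
      #(legVertices G r) := card_filter_add_card_filter_not _
  have htwo : #{a ∈ legVertices G r | G.degree a = 2} +
      #{a ∈ legVertices G r | ¬ G.degree a = 2} = #(legVertices G r) :=
    card_filter_add_card_filter_not _
  omega

theorem sum_card_legTops_div_two_le_homNumber [DecidableEq V] (hG : G.IsTree) (r : V) :
    ∑ x, #{a ∈ legTops G r | rootedParent G r a = x} / 2 ≤ homNumber G := by
  refine sum_card_siblings_div_two_le_homNumber hG (fun h => ?_) fun a ha b hb hdesc => ?_
  · exact (mem_legVertices.1 (mem_filter.1 h).1).1 rfl
  · have hle := (mem_legVertices.1 (mem_filter.1 ha).1).2 _ hdesc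
    have hge := (mem_filter.1 hb).2
    omega

theorem card_legTops_fiber_weight_le [DecidableEq V] [Nontrivial V] (hG : G.IsTree) (r x : V) :
    3 * #{a ∈ legTops G r | rootedParent G r a = x} + 5 ≤
      6 * (#{a ∈ legTops G r | rootedParent G r a = x} / 2) + 2 * G.degree x +
        3 * (if G.degree x = 1 then 1 else 0) + (if G.degree x = 2 then 1 else 0) +
        2 * (if G.degree x = 3 then 1 else 0) := by
  have hpos := hG.connected.preconnected.degree_pos_of_nontrivial x
  by_cases hx : 3 ≤ G.degree x
  · split_ifs <;> omega
  · have hempty : #{a ∈ legTops G r | rootedParent G r a = x} = 0 := by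
      refine card_eq_zero.2 (filter_eq_empty_iff.2 fun a ha hax => hx ?_)
      exact hax ▸ (mem_filter.1 ha).2
    split_ifs <;> omega

theorem card_add_four_le_of_three_le_degree [Nontrivial V] (hG : G.IsTree)
    (hr : 3 ≤ G.degree r) :
    Fintype.card V + 4 ≤
      6 * homNumber G + #{v | G.degree v = 2} + 2 * #{v | G.degree v = 3} := by
  classical
  have hweight := sum_le_sum fun x (_ : x ∈ univ) => card_legTops_fiber_weight_le hG r x
  have hfiber : #(legTops G r) = ∑ x, #{a ∈ legTops G r | rootedParent G r a = x} :=
    card_eq_sum_card_fiberwise fun _ _ => mem_coe.2 (mem_univ _)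
  simp only [sum_add_distrib, ← mul_sum, ← card_filter, sum_const, card_univ, smul_eq_mul,
    ← hfiber] at hweight
  have hleaves := card_degree_eq_one_le_card_legTops hG hr
  have hhom := sum_card_legTops_div_two_le_homNumber hG r
  have hdegree := sum_degree_add_two hG
  omega

end Legs

section Bounds

variable {V : Type*} [Fintype V] {G : SimpleGraph V} [DecidableRel G.Adj] [Nontrivial V]

theorem card_eq_card_degree_eq_two_add_two (hG : G.IsTree) (hdeg : ∀ v, G.degree v ≤ 2) :
    Fintype.card V = #{v | G.degree v = 2} + 2 := by
  have hlocal (v : V) : G.degree v = 1 + if G.degree v = 2 then 1 else 0 := by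
    have hpos := hG.connected.preconnected.degree_pos_of_nontrivial v
    have hle := hdeg v
    split_ifs <;> omega
  have hdegree := sum_degree_add_two hG
  rw [sum_congr rfl fun v _ => hlocal v, sum_add_distrib, ← card_filter, ← card_eq_sum_ones,
    card_univ] at hdegree
  omega

theorem card_add_four_le (hG : G.IsTree) :
    Fintype.card V + 4 ≤
      6 * homNumber G + #{v | G.degree v = 2} + 2 * #{v | G.degree v = 3} := by
  by_cases h : ∃ r, 3 ≤ G.degree r
  · obtain ⟨r, hr⟩ := h
    exact card_add_four_le_of_three_le_degree hG hr
  · have hpath := card_eq_card_degree_eq_two_add_two hG fun v => by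
      by_contra hv
      exact h ⟨v, by omega⟩
    have hone : 1 ≤ homNumber G := one_le_homNumber
    omega

theorem card_le_radius_mul_homNumber (hG : G.IsTree) :
    Fintype.card V ≤
      #{v | G.degree v = 1} + #{v | G.degree v = 2} + G.radius.toNat * homNumber G := by
  have hsplit : Fintype.card V ≤
      #{v | G.degree v = 1} + #{v | G.degree v = 2} + #{v | 3 ≤ G.degree v} := by
    classical
    refine (card_le_card fun v _ => ?_).trans
      ((card_union_le _ _).trans (Nat.add_le_add_right (card_union_le _ _) _))
    have hpos := hG.connected.preconnected.degree_pos_of_nontrivial v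
    simp only [mem_union, mem_filter_univ]
    omega
  have hthree := card_three_le_degree_le_radius_mul_homNumber hG
  omega

end Bounds

theorem div_two_mul_diam_le_of_div_radius_le {V : Type*} [Finite V] [Nontrivial V]
    {G : SimpleGraph V} (hG : G.Connected) {x h : ℝ} (hh : 0 ≤ h)
    (hx : x / G.radius.toNat ≤ h) : x / (2 * G.diam) ≤ h := by
  have hpos : (0 : ℝ) < G.radius.toNat := Nat.cast_pos.2 <| ENat.toNat_pos
    SimpleGraph.radius_ne_zero_of_nontrivial (SimpleGraph.radius_ne_top_iff.2 hG)
  have hle : (G.radius.toNat : ℝ) ≤ G.diam := Nat.cast_le.2 <| ENat.toNat_le_toNat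
    SimpleGraph.radius_le_ediam (SimpleGraph.connected_iff_ediam_ne_top.1 hG)
  refine div_le_of_le_mul₀ (by positivity) hh ?_
  calc x ≤ h * G.radius.toNat := (div_le_iff₀ hpos).1 hx
    _ ≤ h * (2 * G.diam) := by gcongr; linarith

theorem stmt19_general {V : Type*} [Fintype V] [Nontrivial V] (G : SimpleGraph V)
    [DecidableRel G.Adj] (hT : G.IsTree) (n : ℕ) (hn : Fintype.card V = n)
    (d : ℕ → ℕ) (hd : ∀ i, d i = {v : V | G.degree v = i}.ncard) :
    ((n : ℝ) + 4 - d 2 - 2 * d 3) / 6 ≤ homNumber G ∧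
      ((n : ℝ) - d 1 - d 2) / G.radius.toNat ≤ homNumber G := by
  have hcard (i : ℕ) : #{v | G.degree v = i} = d i := by
    rw [hd, ← Set.ncard_coe_finset, coe_filter_univ]
  have hsix := card_add_four_le hT
  have hradius := card_le_radius_mul_homNumber hT
  simp only [hcard, hn, ← Nat.cast_le (α := ℝ)] at hsix hradius
  push_cast at hsix hradius
  refine ⟨by linarith, div_le_of_le_mul₀ (by positivity) (by positivity) (by linarith)⟩

/-- For every tree `T` on `n ≥ 2` vertices, with `d_i` the number of vertices of
degree `i`: `h(T) ≥ (n − d₂ − 4d₃)/6` and `h(T) ≥ (n − d₁ − d₂)/(2·diam(T))`. -/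
theorem stmt19 {V : Type*} [Fintype V] (G : SimpleGraph V) [DecidableRel G.Adj]
    (hT : G.IsTree) (n : ℕ) (hn : Fintype.card V = n) (h2 : 2 ≤ n)
    (d : ℕ → ℕ) (hd : ∀ i, d i = {v : V | G.degree v = i}.ncard) :
    ((n : ℝ) - d 2 - 4 * d 3) / 6 ≤ homNumber G ∧
      ((n : ℝ) - d 1 - d 2) / (2 * G.diam) ≤ homNumber G := by
  have : Nontrivial V := Fintype.one_lt_card_iff_nontrivial.1 (hn ▸ h2)
  obtain ⟨hsix, hradius⟩ := stmt19_general G hT n hn d hd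
  exact ⟨by linarith [(d 3).cast_nonneg (α := ℝ)],
    div_two_mul_diam_le_of_div_radius_le hT.connected (Nat.cast_nonneg _) hradius⟩
end
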